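/- arXiv:1411.4444 — 4 statements merged into one kernel-verified Lean document; each statement's English description precedes it below -/
import Mathlib

section
/- Let h : B^n → ℝ∪{∞} be an L-extendable function and let x ∈ dom h. If x is not a minimizer of h over B^n, then there exists y ∈ B^n with d(x,y) ≤ 2 and h(y) < h(x). -/
/-!
Fix an alternating L-convex relaxation `g` of `h` and a black `y` with `h y < h x`. Every argument
takes place in the finite box of points lying coordinatewise between `x` and `y`; by the tree
property this box, and its intersection with the ball of radius `2` around `x`, are closed under
`•` and `∘`.

Two facts drive the proof, for a point `z` of a set `C` closed under `•` and `∘`.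

* Rounding (`exists_black_round`): if `z` minimizes `g` on `C`, then iterating `v ↦ v • z`
  never increases `g`, because `g z ≤ g (v ∘ z)`. If `v` is black wherever `z` is white, the iteration stops at a black point
  `q` with `z ⪯ q`.
* Local minimality is global (`global_of_local`): if `g v < g z`, then one of `v • z`, `v ∘ z`
  has a value below `g z` too, and it lies closer to `z` as long as `d(v, z) ≥ 2`, so a better
  point exists within distance `1` of `z`.

Now let `z` minimize `g` on the box intersected with the ball of radius `2` around `x`, and among
those minimizers let it be closest to `x` in the `l₁` sense. If `d(x, z) ≤ 1`, then `z` is a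
minimizer on the whole box, and rounding `y` to a black `q` with `z ⪯ q` gives `h q ≤ h y < h x`
and `d(x, q) ≤ 2`. Otherwise `x ∘ z` is strictly closer to `x` than `z`, so `g z < g (x ∘ z)`,
whence L-convexity forces `g (x • z) < g x`; rounding `x • z` inside the ball gives the answer.
-/

open SimpleGraph

/-- A tree `T` regarded as a bipartite graph with black class `B` and white class `W`,
together with the discrete midpoint operations `bull` (`•`) and `circ` (`∘`) characterized
by: `{u • v, u ∘ v} = {a, b}` where `(a,b)` is the unique pair with
`d(u,v) = d(u,a) + d(a,b) + d(b,v)`, `d(u,a) = d(b,v)`, `d(a,b) ≤ 1`, and `u ∘ v ⪯ u • v`. -/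
structure AltTree (V : Type*) where
  T : SimpleGraph V
  tree : T.IsTree
  B : Set V
  W : Set V
  color_disjoint : Disjoint B W
  color_cover : B ∪ W = Set.univ
  adj_colors : ∀ ⦃u v : V⦄, T.Adj u v → (u ∈ B ∧ v ∈ W) ∨ (u ∈ W ∧ v ∈ B)
  bull : V → V → V
  circ : V → V → V
  mid_spec : ∀ u v : V,
      (T.dist u v = T.dist u (bull u v) + T.dist (bull u v) (circ u v) + T.dist (circ u v) v
        ∧ T.dist u (bull u v) = T.dist (circ u v) v)
    ∨ (T.dist u v = T.dist u (circ u v) + T.dist (circ u v) (bull u v) + T.dist (bull u v) v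
        ∧ T.dist u (circ u v) = T.dist (bull u v) v)
  mid_close : ∀ u v : V, T.dist (bull u v) (circ u v) ≤ 1
  circ_le_bull : ∀ u v : V, circ u v = bull u v ∨
      (T.Adj (circ u v) (bull u v) ∧ circ u v ∈ W ∧ bull u v ∈ B)

namespace AltTree

variable {V : Type*} {n : ℕ}

/-- The alternating partial order `u ⪯ v` on the vertices of `T`:
`u ⪯ v` iff `u = v` or `u` and `v` are adjacent with `u` white and `v` black. -/
def le (A : AltTree V) (u v : V) : Prop :=
  u = v ∨ (A.T.Adj u v ∧ u ∈ A.W ∧ v ∈ A.B)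

/-- The componentwise partial order on `T^n`.  `A.leP y x` means `y ∈ I(x)`,
and `A.leP x y` means `y ∈ F(x)`. -/
def leP (A : AltTree V) (x y : Fin n → V) : Prop := ∀ i, A.le (x i) (y i)

/-- The `l∞`-metric on `T^n`. -/
noncomputable def distP (A : AltTree V) (x y : Fin n → V) : ℕ :=
  Finset.univ.sup fun i => A.T.dist (x i) (y i)

/-- Componentwise `•` on `T^n`. -/
def bullP (A : AltTree V) (x y : Fin n → V) : Fin n → V := fun i => A.bull (x i) (y i)

/-- Componentwise `∘` on `T^n`. -/
def circP (A : AltTree V) (x y : Fin n → V) : Fin n → V := fun i => A.circ (x i) (y i)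

/-- Alternating L-convexity: `g(x) + g(y) ≥ g(x • y) + g(x ∘ y)` for all `x, y ∈ T^n`. -/
def IsLConvex (A : AltTree V) (g : (Fin n → V) → WithTop ℝ) : Prop :=
  ∀ x y : Fin n → V, g (A.bullP x y) + g (A.circP x y) ≤ g x + g y

end AltTree

namespace AltTree

variable {V : Type*} {n : ℕ}

/-! ### Betweenness in trees -/

/-- In a tree, a vertex metrically between `u` and `v` lies on every walk from `u` to `v`. -/
lemma mem_support_of_between (A : AltTree V) {u m v : V}
    (hm : A.T.dist u m + A.T.dist m v = A.T.dist u v) (w : A.T.Walk u v) : m ∈ w.support := by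
  classical
  obtain ⟨p, hp⟩ := (A.tree.connected u m).exists_walk_length_eq_dist
  obtain ⟨q, hq⟩ := (A.tree.connected m v).exists_walk_length_eq_dist
  have hpath : (p.append q).IsPath :=
    Walk.isPath_of_length_eq_dist _ (by rw [Walk.length_append]; omega)
  have heq : w.bypass = p.append q :=
    A.tree.existsUnique_path u v |>.unique w.bypass_isPath hpath
  apply w.support_bypass_subset_support
  rw [heq, Walk.mem_support_append_iff]
  exact Or.inl p.end_mem_support

lemma between_of_mem_support (A : AltTree V) {u m v : V} (w : A.T.Walk u v)
    (hw : w.length = A.T.dist u v) (hm : m ∈ w.support) :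
    A.T.dist u m + A.T.dist m v = A.T.dist u v := by
  classical
  have h1 := dist_le (w.takeUntil m hm)
  have h2 := dist_le (w.dropUntil m hm)
  have h3 := congrArg Walk.length (w.take_spec hm)
  rw [Walk.length_append] at h3
  have h4 := A.tree.connected.dist_triangle (u := u) (v := m) (w := v)
  omega

/-- A vertex between `u` and `v` is also between `u` and `x` or between `x` and `v`, for every
third vertex `x`: otherwise the geodesics from `u` to `x` and from `x` to `v` would join to a walk
from `u` to `v` avoiding it. -/
lemma between_or (A : AltTree V) {u m v : V}
    (hm : A.T.dist u m + A.T.dist m v = A.T.dist u v) (x : V) :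
    A.T.dist u m + A.T.dist m x = A.T.dist u x ∨ A.T.dist x m + A.T.dist m v = A.T.dist x v := by
  obtain ⟨p, hp⟩ := (A.tree.connected u x).exists_walk_length_eq_dist
  obtain ⟨q, hq⟩ := (A.tree.connected x v).exists_walk_length_eq_dist
  have h := A.mem_support_of_between hm (p.append q)
  rw [Walk.mem_support_append_iff] at h
  exact h.imp (A.between_of_mem_support p hp) (A.between_of_mem_support q hq)

lemma finite_between (A : AltTree V) (u v : V) :
    {m | A.T.dist u m + A.T.dist m v = A.T.dist u v}.Finite := by
  obtain ⟨p, _⟩ := (A.tree.connected u v).exists_walk_length_eq_dist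
  exact p.support.finite_toSet.subset fun m hm => A.mem_support_of_between hm p

/-- Balls in a tree are geodesically convex. -/
lemma dist_le_of_between (A : AltTree V) {u m v x : V} {r : ℕ}
    (hm : A.T.dist u m + A.T.dist m v = A.T.dist u v)
    (hu : A.T.dist x u ≤ r) (hv : A.T.dist x v ≤ r) : A.T.dist x m ≤ r := by
  have h1 := A.T.dist_comm (u := u) (v := x)
  have h2 := A.T.dist_comm (u := m) (v := x)
  rcases A.between_or hm x with h | h <;> omega

/-- Intervals in a tree are geodesically convex. -/
lemma between_of_between (A : AltTree V) {u m v x y : V}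
    (hm : A.T.dist u m + A.T.dist m v = A.T.dist u v)
    (hu : A.T.dist x u + A.T.dist u y = A.T.dist x y)
    (hv : A.T.dist x v + A.T.dist v y = A.T.dist x y) :
    A.T.dist x m + A.T.dist m y = A.T.dist x y := by
  have h1 := A.T.dist_comm (u := u) (v := x)
  have h2 := A.T.dist_comm (u := m) (v := x)
  have h3 := A.tree.connected.dist_triangle (u := m) (v := u) (w := y)
  have h4 := A.tree.connected.dist_triangle (u := m) (v := v) (w := y)
  have h5 := A.tree.connected.dist_triangle (u := x) (v := m) (w := y)
  have h6 := A.T.dist_comm (u := u) (v := m)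
  rcases A.between_or hm x with h | h <;> omega

/-! ### Colors and midpoints -/

lemma not_mem_B_iff (A : AltTree V) {v : V} : v ∉ A.B ↔ v ∈ A.W := by
  have h1 : v ∈ A.B → v ∉ A.W := fun h => Set.disjoint_left.mp A.color_disjoint h
  have h2 : v ∈ A.B ∪ A.W := A.color_cover ▸ Set.mem_univ v
  rcases h2 with h2 | h2
  · exact ⟨fun h => absurd h2 h, fun h => absurd h (h1 h2)⟩
  · exact ⟨fun _ => h2, fun _ h => h1 h h2⟩

lemma even_length_iff (A : AltTree V) {u v : V} (w : A.T.Walk u v) :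
    Even w.length ↔ (u ∈ A.B ↔ v ∈ A.B) := by
  induction w with
  | nil => simp
  | cons h p ih =>
    rw [Walk.length_cons, Nat.even_add_one, ih]
    have h3 := A.adj_colors h
    simp only [← A.not_mem_B_iff] at h3
    tauto

lemma even_dist_iff (A : AltTree V) (u v : V) :
    Even (A.T.dist u v) ↔ (u ∈ A.B ↔ v ∈ A.B) := by
  obtain ⟨p, hp⟩ := (A.tree.connected u v).exists_walk_length_eq_dist
  rw [← hp, A.even_length_iff]

lemma bull_between (A : AltTree V) (u v : V) :
    A.T.dist u (A.bull u v) + A.T.dist (A.bull u v) v = A.T.dist u v := by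
  have h1 := A.tree.connected.dist_triangle (u := u) (v := A.bull u v) (w := v)
  have h2 := A.tree.connected.dist_triangle (u := A.bull u v) (v := A.circ u v) (w := v)
  have h3 := A.tree.connected.dist_triangle (u := u) (v := A.circ u v) (w := A.bull u v)
  have h4 := A.T.dist_comm (u := A.bull u v) (v := A.circ u v)
  rcases A.mid_spec u v with h | h <;> omega

lemma circ_between (A : AltTree V) (u v : V) :
    A.T.dist u (A.circ u v) + A.T.dist (A.circ u v) v = A.T.dist u v := by
  have h1 := A.tree.connected.dist_triangle (u := u) (v := A.circ u v) (w := v)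
  have h2 := A.tree.connected.dist_triangle (u := A.circ u v) (v := A.bull u v) (w := v)
  have h3 := A.tree.connected.dist_triangle (u := u) (v := A.bull u v) (w := A.circ u v)
  have h4 := A.T.dist_comm (u := A.bull u v) (v := A.circ u v)
  rcases A.mid_spec u v with h | h <;> omega

/-- The midpoints are at distance at most `⌈d(u,v)/2⌉` from the ends; only the three cases below are
needed. -/
lemma mid_half (A : AltTree V) (u v : V) :
    2 * A.T.dist (A.bull u v) v ≤ A.T.dist u v + 1 ∧
    2 * A.T.dist (A.circ u v) v ≤ A.T.dist u v + 1 ∧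
    2 * A.T.dist u (A.circ u v) ≤ A.T.dist u v + 1 := by
  have h1 := A.bull_between u v
  have h2 := A.circ_between u v
  have h3 := A.mid_close u v
  have h4 := A.T.dist_comm (u := A.bull u v) (v := A.circ u v)
  rcases A.mid_spec u v with h | h <;> omega

/-- If the ends have different colors, their distance is odd, so the midpoints differ and `•` is
the black one. -/
lemma bull_mem_B (A : AltTree V) {u v : V} (huv : ¬ (u ∈ A.B ↔ v ∈ A.B)) :
    A.bull u v ∈ A.B := by
  rcases A.circ_le_bull u v with h | h
  · exfalso
    apply huv
    rw [← A.even_dist_iff]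
    have h1 := A.mid_spec u v
    rw [h, SimpleGraph.dist_self] at h1
    exact ⟨A.T.dist u (A.bull u v), by omega⟩
  · exact h.2.2

/-- A step `v ↦ v • z` moves strictly towards `z` unless `z ⪯ v`. -/
lemma dist_bull_lt (A : AltTree V) {v z : V} (h : ¬ A.le z v) :
    A.T.dist (A.bull v z) z < A.T.dist v z := by
  have h1 := A.mid_half v z
  have h0 : A.T.dist v z ≠ 0 := fun h0 =>
    h (Or.inl ((A.tree.connected.dist_eq_zero_iff.mp h0).symm))
  by_cases h2 : 2 ≤ A.T.dist v z
  · omega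
  have hadj : A.T.Adj v z := SimpleGraph.dist_eq_one_iff_adj.mp (by omega)
  -- The only adjacent pair left is `v` white, `z` black, where `v • z = z`.
  have hcol := A.adj_colors hadj
  have hv : v ∉ A.B := fun hv => by
    rcases hcol with hc | hc
    · exact h (Or.inr ⟨hadj.symm, hc.2, hc.1⟩)
    · exact A.not_mem_B_iff.mpr hc.1 hv
  have hz : z ∈ A.B := by
    rcases hcol with hc | hc
    · exact absurd hc.1 hv
    · exact hc.2
  have hb : A.bull v z ∈ A.B := A.bull_mem_B (by tauto)
  have hne : A.T.dist v (A.bull v z) ≠ 0 := fun h0 => by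
    rw [A.tree.connected.dist_eq_zero_iff] at h0
    exact hv (h0 ▸ hb)
  have h3 := A.bull_between v z
  omega

/-! ### Sets closed under the midpoint operations -/

/-- A set of points of `T^n` closed under both midpoint operations. -/
def MidClosed (A : AltTree V) (C : Set (Fin n → V)) : Prop :=
  ∀ u ∈ C, ∀ v ∈ C, A.bullP u v ∈ C ∧ A.circP u v ∈ C

/-- The points of `T^n` lying coordinatewise between `x` and `y`. -/
def box (A : AltTree V) (x y : Fin n → V) : Set (Fin n → V) :=
  {v | ∀ i, A.T.dist (x i) (v i) + A.T.dist (v i) (y i) = A.T.dist (x i) (y i)}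

/-- The closed `l∞`-ball in `T^n`. -/
def ball (A : AltTree V) (x : Fin n → V) (r : ℕ) : Set (Fin n → V) :=
  {v | ∀ i, A.T.dist (x i) (v i) ≤ r}

lemma midClosed_box (A : AltTree V) (x y : Fin n → V) : A.MidClosed (A.box x y) :=
  fun _ hu _ hv =>
    ⟨fun i => A.between_of_between (A.bull_between _ _) (hu i) (hv i),
     fun i => A.between_of_between (A.circ_between _ _) (hu i) (hv i)⟩

lemma midClosed_ball (A : AltTree V) (x : Fin n → V) (r : ℕ) : A.MidClosed (A.ball x r) :=
  fun _ hu _ hv =>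
    ⟨fun i => A.dist_le_of_between (A.bull_between _ _) (hu i) (hv i),
     fun i => A.dist_le_of_between (A.circ_between _ _) (hu i) (hv i)⟩

lemma MidClosed.inter {A : AltTree V} {C D : Set (Fin n → V)} (hC : A.MidClosed C)
    (hD : A.MidClosed D) : A.MidClosed (C ∩ D) :=
  fun u hu v hv =>
    ⟨⟨(hC u hu.1 v hv.1).1, (hD u hu.2 v hv.2).1⟩, ⟨(hC u hu.1 v hv.1).2, (hD u hu.2 v hv.2).2⟩⟩

lemma finite_box (A : AltTree V) (x y : Fin n → V) : (A.box x y).Finite :=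
  (Set.Finite.pi' fun i => A.finite_between (x i) (y i)).subset fun _ hv i => hv i

/-! ### Rounding and local minimality -/

/-- Persistency: for a minimizer `z` of `g` on `C`, a point that is black wherever `z` is white can
be rounded to a black point above `z` without increasing `g`. The coloring hypothesis survives each
step `v ↦ v • z`. -/
lemma exists_black_round (A : AltTree V) {g : (Fin n → V) → WithTop ℝ} (hg : A.IsLConvex g)
    {C : Set (Fin n → V)} (hC : A.MidClosed C) {z : Fin n → V} (hz : z ∈ C) (hztop : g z ≠ ⊤)
    (hmin : ∀ v ∈ C, g z ≤ g v) :
    ∀ v ∈ C, (∀ i, z i ∈ A.W → v i ∈ A.B) →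
      ∃ q ∈ C, (∀ i, q i ∈ A.B) ∧ A.leP z q ∧ g q ≤ g v := by
  intro v
  induction hN : ∑ i, A.T.dist (v i) (z i) using Nat.strong_induction_on generalizing v with
  | _ N ih =>
  intro hv hcol
  by_cases hle : A.leP z v
  · refine ⟨v, hv, fun i => ?_, hle, le_rfl⟩
    rcases hle i with h | h
    · by_contra hvi
      exact hvi (hcol i (A.not_mem_B_iff.mp (h ▸ hvi)))
    · exact h.2.2
  · obtain ⟨j, hj⟩ := not_forall.mp hle
    have hlt : ∑ i, A.T.dist (A.bullP v z i) (z i) < N := by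
      rw [← hN]
      refine Finset.sum_lt_sum (fun i _ => ?_) ⟨j, Finset.mem_univ j, A.dist_bull_lt hj⟩
      have := A.bull_between (v i) (z i)
      simp only [bullP]
      omega
    obtain ⟨q, hqC, hqB, hzq, hq⟩ := ih _ hlt (A.bullP v z) rfl (hC v hv z hz).1
      (fun i hi => A.bull_mem_B (by
        have := A.not_mem_B_iff.mpr hi
        have := hcol i hi
        tauto))
    refine ⟨q, hqC, hqB, hzq, hq.trans ?_⟩
    -- Since `g z ≤ g (v ∘ z)`, L-convexity leaves `g (v • z) ≤ g v`.
    have h1 := hg v z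
    have h2 := hmin _ (hC v hv z hz).2
    exact (WithTop.add_le_add_iff_right hztop).mp ((add_le_add_right h2 _).trans h1)

/-- A minimizer of `g` among the points of `C` at distance at most `1` from it is a minimizer on
`C`. -/
lemma global_of_local (A : AltTree V) {g : (Fin n → V) → WithTop ℝ} (hg : A.IsLConvex g)
    {C : Set (Fin n → V)} (hC : A.MidClosed C) {z : Fin n → V} (hz : z ∈ C) (hztop : g z ≠ ⊤)
    (hmin : ∀ v ∈ C, (∀ i, A.T.dist (v i) (z i) ≤ 1) → g z ≤ g v) :
    ∀ v ∈ C, g z ≤ g v := by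
  intro v
  induction hN : ∑ i, A.T.dist (v i) (z i) using Nat.strong_induction_on generalizing v with
  | _ N ih =>
  intro hv
  by_cases hnear : ∀ i, A.T.dist (v i) (z i) ≤ 1
  · exact hmin v hv hnear
  obtain ⟨j, hj⟩ := not_forall.mp hnear
  have hb : ∑ i, A.T.dist (A.bullP v z i) (z i) < N := by
    rw [← hN]
    refine Finset.sum_lt_sum (fun i _ => ?_) ⟨j, Finset.mem_univ j, ?_⟩
    · have := A.bull_between (v i) (z i)
      simp only [bullP]
      omega
    · have := A.mid_half (v j) (z j)
      simp only [bullP]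
      omega
  have hc : ∑ i, A.T.dist (A.circP v z i) (z i) < N := by
    rw [← hN]
    refine Finset.sum_lt_sum (fun i _ => ?_) ⟨j, Finset.mem_univ j, ?_⟩
    · have := A.circ_between (v i) (z i)
      simp only [circP]
      omega
    · have := A.mid_half (v j) (z j)
      simp only [circP]
      omega
  have h1 := ih _ hb _ rfl (hC v hv z hz).1
  have h2 := ih _ hc _ rfl (hC v hv z hz).2
  exact (WithTop.add_le_add_iff_right hztop).mp ((add_le_add h1 h2).trans (hg v z))

end AltTree

/-- Theorem 2.9, optimality criterion for L-extendable functions.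
Let `h : B^n → ℝ ∪ {∞}` be L-extendable (there exists an alternating L-convex
`g : T^n → ℝ ∪ {∞}` whose restriction to `B^n` equals `h`) and `x ∈ dom h`.
If `x` is not a minimizer of `h` over `B^n`, then there exists `y ∈ B^n`
with `d(x,y) ≤ 2` and `h(y) < h(x)`. -/
theorem stmt2 {V : Type*} (A : AltTree V) {n : ℕ}
    (h : (Fin n → V) → WithTop ℝ)
    (hext : ∃ g : (Fin n → V) → WithTop ℝ, A.IsLConvex g ∧
      ∀ x : Fin n → V, (∀ i, x i ∈ A.B) → g x = h x)
    (x : Fin n → V) (hxB : ∀ i, x i ∈ A.B) (hdom : h x ≠ ⊤)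
    (hnotmin : ¬ ∀ y : Fin n → V, (∀ i, y i ∈ A.B) → h x ≤ h y) :
    ∃ y : Fin n → V, (∀ i, y i ∈ A.B) ∧ A.distP x y ≤ 2 ∧ h y < h x := by
  classical
  obtain ⟨g, hg, hgh⟩ := hext
  push Not at hnotmin
  obtain ⟨y, hyB, hyx⟩ := hnotmin
  rw [← hgh x hxB] at hdom hyx ⊢
  rw [← hgh y hyB] at hyx
  have hxbox : x ∈ A.box x y := fun i => by simp
  have hybox : y ∈ A.box x y := fun i => by simp
  have hxball : x ∈ A.ball x 2 := fun i => by simp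
  have hbox := A.midClosed_box x y
  have hS := hbox.inter (A.midClosed_ball x 2)
  suffices hq : ∃ q : Fin n → V, (∀ i, q i ∈ A.B) ∧ q ∈ A.ball x 2 ∧ g q < g x by
    obtain ⟨q, hqB, hqx, hq⟩ := hq
    exact ⟨q, hqB, Finset.sup_le fun i _ => hqx i, by rwa [← hgh q hqB]⟩
  -- The lexicographic order makes `z` a minimizer of `g` that is `l₁`-closest to `x`.
  obtain ⟨z, hz, hzlex⟩ := Set.exists_min_image (A.box x y ∩ A.ball x 2)
    (fun v => toLex (g v, ∑ i, A.T.dist (x i) (v i)))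
    ((A.finite_box x y).inter_of_left _) ⟨x, hxbox, hxball⟩
  simp only [Prod.Lex.toLex_le_toLex] at hzlex
  have hzmin : ∀ v ∈ A.box x y ∩ A.ball x 2, g z ≤ g v := fun v hv =>
    (hzlex v hv).elim le_of_lt fun h => h.1.le
  have hztop : g z ≠ ⊤ := ((hzmin x ⟨hxbox, hxball⟩).trans_lt hdom.lt_top).ne
  by_cases hnear : ∀ i, A.T.dist (x i) (z i) ≤ 1
  · have hglob := A.global_of_local hg hbox hz.1 hztop fun v hv hvz =>
      hzmin v ⟨hv, fun i => by
        have h1 := A.tree.connected.dist_triangle (u := x i) (v := z i) (w := v i)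
        have h2 := A.T.dist_comm (u := z i) (v := v i)
        have h3 := hnear i
        have h4 := hvz i
        omega⟩
    obtain ⟨q, -, hqB, hzq, hq⟩ :=
      A.exists_black_round hg hbox hz.1 hztop hglob y hybox fun i _ => hyB i
    refine ⟨q, hqB, fun i => ?_, hq.trans_lt hyx⟩
    have h1 := A.tree.connected.dist_triangle (u := x i) (v := z i) (w := q i)
    have h2 := hnear i
    have h3 : A.T.dist (z i) (q i) ≤ 1 := by
      rcases hzq i with h | h
      · simp [h]
      · exact (SimpleGraph.dist_eq_one_iff_adj.mpr h.1).le
    omega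
  · obtain ⟨j, hj⟩ := not_forall.mp hnear
    have hmem := hS x ⟨hxbox, hxball⟩ z hz
    have hcloser : ∑ i, A.T.dist (x i) (A.circP x z i) < ∑ i, A.T.dist (x i) (z i) := by
      refine Finset.sum_lt_sum (fun i _ => ?_) ⟨j, Finset.mem_univ j, ?_⟩
      · have := A.circ_between (x i) (z i)
        simp only [AltTree.circP]
        omega
      · have := A.mid_half (x j) (z j)
        simp only [AltTree.circP]
        omega
    have hcirc : g z < g (A.circP x z) :=
      (hzlex _ hmem.2).elim id fun h => absurd h.2 (not_le.mpr hcloser)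
    have hbull : g (A.bullP x z) < g x := by
      by_contra hcon
      have h1 := (add_le_add_left (not_lt.mp hcon) (g (A.circP x z))).trans (hg x z)
      exact not_le.mpr hcirc ((WithTop.add_le_add_iff_left hdom).mp h1)
    obtain ⟨q, hqS, hqB, -, hq⟩ :=
      A.exists_black_round hg hS hz hztop hzmin (A.bullP x z) hmem.1 fun i hi =>
        A.bull_mem_B (by
          have := A.not_mem_B_iff.mpr hi
          have := hxB i
          tauto)
    exact ⟨q, hqB, hqS.2, hq.trans_lt hbull⟩
end

section
/- Let h : ℤ → ℝ be a nondecreasing convex function and let z be a vertex of the tree T. Then the function u ↦ h(d(u,z)) on the vertex set of T is convex on T. -/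
/-!
Consecutive vertices `p, q, r` on a segment of a tree are the consecutive vertices of its unique
path (`OnSeg.eq_getVert`), so `p` and `r` are distinct neighbours of `q`. In a tree the distance
to `z` changes by exactly one along an edge, and the only neighbour of `q` closer to `z` than `q`
is the second vertex of the path from `q` to `z` (again `OnSeg.eq_getVert`). Hence at most one of
`p, r` is closer to `z` than `q`. If one of them is closer and the other farther, the inequality is
convexity of `h` at `d(q,z)`; if both are farther, monotonicity of `h` is used as well.
-/

open SimpleGraph

/-- `s = [u,v]_t`: `s` is the vertex on the unique `u`–`v` path of `T` at distance `t`
from `u`, i.e. `d(u,v) = d(u,s) + d(s,v)` and `d(u,s) = t`. -/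
def OnSeg {V : Type*} (T : SimpleGraph V) (u v s : V) (t : ℕ) : Prop :=
  T.dist u v = T.dist u s + T.dist s v ∧ T.dist u s = t

/-- A function `f` on the vertex set of the tree `T` is convex if for all vertices
`u, v` the map `t ↦ f([u,v]_t)` on `{0, 1, …, d(u,v)}` is convex. -/
def TreeConvex {V : Type*} (T : SimpleGraph V) (f : V → ℝ) : Prop :=
  ∀ u v : V, ∀ p q r : V, ∀ t : ℕ, t + 2 ≤ T.dist u v →
    OnSeg T u v p t → OnSeg T u v q (t + 1) → OnSeg T u v r (t + 2) →
    2 * f q ≤ f p + f r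

/-- In an acyclic connected graph, the vertex at position `t` of a segment is the `t`-th vertex of
the unique path: concatenating geodesics through `s` gives a path, which must be `w`. -/
theorem OnSeg.eq_getVert {V : Type*} {T : SimpleGraph V} (htree : T.IsTree) {u v s : V} {t : ℕ}
    (hs : OnSeg T u v s t) {w : T.Walk u v} (hw : w.IsPath) : s = w.getVert t := by
  obtain ⟨a, ha⟩ := htree.connected.exists_walk_length_eq_dist u s
  obtain ⟨b, hb⟩ := htree.connected.exists_walk_length_eq_dist s v
  have hab : (a.append b).IsPath := Walk.isPath_of_length_eq_dist _ (by
    rw [Walk.length_append, ha, hb, hs.1])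
  have hwab : w = a.append b := (htree.existsUnique_path u v).unique hw hab
  have ht : t = a.length := by rw [ha, hs.2]
  rw [hwab, Walk.getVert_append, ht]
  simp

/-- Two neighbours of `q` that are both closer to `z` than `q` coincide. -/
theorem eq_of_adj_of_closer {V : Type*} {T : SimpleGraph V} (htree : T.IsTree) {p q r z : V}
    (hp : T.Adj q p) (hr : T.Adj q r) (hpz : T.dist q z = T.dist p z + 1)
    (hrz : T.dist q z = T.dist r z + 1) : p = r := by
  obtain ⟨w, hw, -⟩ := htree.existsUnique_path q z
  have hp1 : T.dist q p = 1 := dist_eq_one_iff_adj.2 hp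
  have hr1 : T.dist q r = 1 := dist_eq_one_iff_adj.2 hr
  have hps : OnSeg T q z p 1 := ⟨by omega, hp1⟩
  have hrs : OnSeg T q z r 1 := ⟨by omega, hr1⟩
  rw [hps.eq_getVert htree hw, hrs.eq_getVert htree hw]

/-- Theorem 2.14 (1).  If `h : ℤ → ℝ` is nondecreasing and convex
and `z` is a vertex of the tree `T`, then `u ↦ h(d(u,z))` is convex on `T`. -/
theorem stmt5 {V : Type*} (T : SimpleGraph V) (htree : T.IsTree)
    (h : ℤ → ℝ) (hmono : ∀ t : ℤ, h (t - 1) ≤ h t)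
    (hconv : ∀ t : ℤ, 0 ≤ h (t + 1) - 2 * h t + h (t - 1))
    (z : V) :
    TreeConvex T (fun u => h (T.dist u z)) := by
  intro u v p q r t ht hp hq hr
  obtain ⟨w, hw, -⟩ := htree.existsUnique_path u v
  have hlen : T.dist u v ≤ w.length := dist_le w
  have hqp : T.Adj q p := by
    rw [hp.eq_getVert htree hw, hq.eq_getVert htree hw]
    exact (w.adj_getVert_succ (by omega)).symm
  have hqr : T.Adj q r := by
    rw [hq.eq_getVert htree hw, hr.eq_getVert htree hw]
    exact w.adj_getVert_succ (by omega)
  have hne : p ≠ r := by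
    rintro rfl
    have := hp.2.symm.trans hr.2
    omega
  have step : ∀ {x : V}, T.Adj q x →
      T.dist q z = T.dist x z + 1 ∨ T.dist x z = T.dist q z + 1 := by
    intro x hx
    rw [T.dist_comm (u := q), T.dist_comm (u := x)]
    exact htree.dist_eq_dist_add_one_of_adj z hx
  have hc := hconv (T.dist q z)
  have hm := hmono (T.dist q z)
  have hm' := hmono (T.dist q z + 1)
  have closer : ∀ {x : V}, T.dist q z = T.dist x z + 1 →
      (T.dist x z : ℤ) = T.dist q z - 1 := by intro x hx; omega
  have farther : ∀ {x : V}, T.dist x z = T.dist q z + 1 →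
      (T.dist x z : ℤ) = T.dist q z + 1 := by intro x hx; omega
  show 2 * h (T.dist q z) ≤ h (T.dist p z) + h (T.dist r z)
  rcases step hqp with h1 | h1 <;> rcases step hqr with h2 | h2
  · exact absurd (eq_of_adj_of_closer htree hqp hqr h1 h2) hne
  · rw [closer h1, farther h2]; linarith
  · rw [farther h1, closer h2]; linarith
  · rw [farther h1, farther h2]
    rw [add_sub_cancel_right] at hm'
    linarith
end

section
/- Let h : ℤ → ℝ be a nondecreasing, convex, even function. Then h_T(u,v) := h(d(u,v)) is alternating L-convex on T×T. Moreover, for every (u,v) ∈ T×T with D := d(u,v), letting a be the vertex of F(u) nearest to v and b the vertex of F(v) nearest to u, for all (s,t) ∈ F(u)×F(v): h_T(s,t) − h(D) equals Δh(1)·d(s,t) if u = v ∈ W; Δh(D)·θ_a(s) if u ∈ W and v ∈ B; Δh(D)·θ_b(t) if u ∈ B and v ∈ W; Δh(D)·(θ_a(s)+θ_b(t)) + Δ²h(D)·μ_{a,b}(s,t) if u,v ∈ W with u ≠ v; and 0 if u,v ∈ B. -/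
/-!
All metric input about the tree comes from two facts: adjacent vertices have distances of
different parity to any third vertex (the colouring), and at most one neighbour of `x` is closer
to `z` (acyclicity, `AltTree.closer_unique`). They give the four-point condition
(`AltTree.four_point`).

For the first part, write `α = d(u₁ • v₁, u₂ • v₂)`, `β = d(u₁ ∘ v₁, u₂ ∘ v₂)`. The four-point
condition expresses the distance from any vertex to a vertex of a geodesic through the distances
to its ends, and yields `α + β ≤ d(u₁, u₂) + d(v₁, v₂)` (`AltTree.mid_dist`). Moreover
`|α - β| ≤ 1`, unless both geodesics have odd length, in which case `α` and `β` may also be even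
numbers that differ by two (`AltTree.mid_diff`). Such a balanced pair minimizes `h p + h q` among
all pairs of at least the same sum, as `h` is nondecreasing and convex and, being even, is affine
between consecutive even numbers (`convex_mid`).

For the local formulas, if `u` is white and `v ≠ u`, then `d(s, t) = d(u, t) + θ_a(s)` for
`s ∈ F(u)` as soon as `t` lies in the direction of `a` from `u` (`AltTree.dist_theta`), and when
`v` is white too this holds for all `t ∈ F(v)` (`AltTree.toward`). So
`d(s, t) = d(u, v) + θ_a(s) + θ_b(t)`, and the formulas follow from evenness of `h`
at `d(u, v)` or at `d(u, v) ± 1`.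
-/

open SimpleGraph

open Classical in
/-- The basic one-dimensional function `θ_a` on `F(u)` (with minimal element `u`):
`θ_a(s) = −1` if `s = a ≠ u`, `0` if `s = u`, and `1` otherwise. -/
noncomputable def theta {V : Type*} (u a s : V) : ℝ :=
  if s = a ∧ a ≠ u then -1 else if s = u then 0 else 1

open Classical in
/-- The basic binary function `μ_{a,b}` on `F(u) × F(v)` (with minimal elements `u, v`):
`μ_{a,b}(s,t) = 0` if `s = a ≠ u` or `t = b ≠ v` or `(s,t) = (u,v)`;
`1` if (`t = v` and `u ≠ s ≠ a`) or (`s = u` and `v ≠ t ≠ b`); and `2` otherwise. -/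
noncomputable def mu {V : Type*} (u v a b s t : V) : ℝ :=
  if (s = a ∧ a ≠ u) ∨ (t = b ∧ b ≠ v) ∨ (s = u ∧ t = v) then 0
  else if (t = v ∧ u ≠ s ∧ s ≠ a) ∨ (s = u ∧ v ≠ t ∧ t ≠ b) then 1
  else 2

/-- Membership in the principal filter `F(u)` of `T`:
`F(u) = {u} ∪ {neighbors of u}` if `u ∈ W`, and `F(u) = {u}` if `u ∈ B`. -/
def memF {V : Type*} (A : AltTree V) (u s : V) : Prop :=
  s = u ∨ (u ∈ A.W ∧ A.T.Adj u s)

/-- The difference `Δh(t) := h(t) − h(t−1)`. -/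
def dh (h : ℤ → ℝ) (t : ℤ) : ℝ := h t - h (t - 1)

/-- The second difference `Δ²h(t) := h(t+1) − 2h(t) + h(t−1)`. -/
def d2h (h : ℤ → ℝ) (t : ℤ) : ℝ := h (t + 1) - 2 * h t + h (t - 1)

/-- Alternating L-convexity for a (real-valued) function on `T × T`, with the
discrete midpoint operations applied componentwise. -/
def IsLConvex2 {V : Type*} (A : AltTree V) (g : V → V → ℝ) : Prop :=
  ∀ u₁ u₂ v₁ v₂ : V,
    g (A.bull u₁ v₁) (A.bull u₂ v₂) + g (A.circ u₁ v₁) (A.circ u₂ v₂) ≤ g u₁ u₂ + g v₁ v₂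

/-! ### Distances in a bicoloured tree -/

namespace AltTree

variable {V : Type*} (A : AltTree V)

open Classical in
/-- The indicator of the white class, as a parity. -/
noncomputable def colour (u : V) : ℕ := if u ∈ A.W then 1 else 0

lemma not_mem_W {u : V} (hu : u ∈ A.B) : u ∉ A.W :=
  fun hw => Set.disjoint_left.mp A.color_disjoint hu hw

lemma colour_black {u : V} (hu : u ∈ A.B) : A.colour u = 0 := by
  simp [colour, A.not_mem_W hu]

lemma colour_white {u : V} (hu : u ∈ A.W) : A.colour u = 1 := by
  simp [colour, hu]

lemma dist_tri (u v w : V) : A.T.dist u w ≤ A.T.dist u v + A.T.dist v w :=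
  A.tree.connected.dist_triangle

lemma dist_parity (u v : V) : A.T.dist u v % 2 = (A.colour u + A.colour v) % 2 := by
  obtain ⟨p, hp⟩ := A.tree.connected.exists_walk_length_eq_dist u v
  rw [← hp]
  clear hp
  induction p with
  | nil => simp; omega
  | cons hadj p ih =>
    rw [Walk.length_cons]
    rcases A.adj_colors hadj with ⟨h1, h2⟩ | ⟨h1, h2⟩
    · rw [A.colour_black h1]
      rw [A.colour_white h2] at ih
      omega
    · rw [A.colour_white h1]
      rw [A.colour_black h2] at ih
      omega

/-- Distances to a fixed vertex from the two ends of an edge differ by exactly one: they differ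
by at most one, and have different parities. -/
lemma adj_dist {x y : V} (hxy : A.T.Adj x y) (z : V) :
    A.T.dist x z = A.T.dist y z + 1 ∨ A.T.dist y z = A.T.dist x z + 1 := by
  have h1 := A.dist_tri x y z
  have h2 := A.dist_tri y x z
  have h3 := dist_eq_one_iff_adj.mpr hxy
  have h4 := dist_eq_one_iff_adj.mpr hxy.symm
  have p1 := A.dist_parity x z
  have p2 := A.dist_parity y z
  have p3 := A.dist_parity x y
  omega

lemma exists_closer {x z : V} (hxz : x ≠ z) :
    ∃ y, A.T.Adj x y ∧ A.T.dist x z = A.T.dist y z + 1 := by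
  obtain ⟨p, hp⟩ := A.tree.connected.exists_walk_length_eq_dist x z
  cases p with
  | nil => exact absurd rfl hxz
  | @cons _ y _ hadj p =>
    refine ⟨y, hadj, ?_⟩
    rw [Walk.length_cons] at hp
    have h1 := dist_le p
    have h2 := A.adj_dist hadj z
    omega

/-- The only place where acyclicity enters: two different neighbours of `x` closer to `z` would
start two different geodesics from `x` to `z`. -/
lemma closer_unique {x y y' z : V} (h : A.T.Adj x y) (h' : A.T.Adj x y')
    (hd : A.T.dist x z = A.T.dist y z + 1) (hd' : A.T.dist x z = A.T.dist y' z + 1) :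
    y = y' := by
  obtain ⟨p, hp⟩ := A.tree.connected.exists_walk_length_eq_dist y z
  obtain ⟨q, hq⟩ := A.tree.connected.exists_walk_length_eq_dist y' z
  have hP : (Walk.cons h p).IsPath := Walk.isPath_of_length_eq_dist _ (by simp [hp, hd])
  have hQ : (Walk.cons h' q).IsPath := Walk.isPath_of_length_eq_dist _ (by simp [hq, hd'])
  have := (A.tree.isAcyclic.subsingleton_path x z).elim ⟨_, hP⟩ ⟨_, hQ⟩
  have h2 := congrArg Subtype.val this
  simp only [Walk.cons.injEq] at h2
  exact h2.1

/-- If `b` and `c` lie on opposite sides of the edge `x x'`, with `c` on the side of `x`, then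
`x` lies on the geodesic from `b` to `c`. -/
lemma dist_across {x x' b c : V} (h : A.T.Adj x x')
    (hb : A.T.dist x b = A.T.dist x' b + 1) (hc : A.T.dist x' c = A.T.dist x c + 1) :
    A.T.dist b c = A.T.dist x b + A.T.dist x c := by
  induction hn : A.T.dist x c generalizing x x' with
  | zero =>
    have : x = c := A.tree.connected.dist_eq_zero_iff.mp hn
    rw [← this, SimpleGraph.dist_comm]; omega
  | succ n ih =>
    obtain ⟨y, hy, hyc⟩ := A.exists_closer (x := x) (z := c) (by rintro rfl; simp at hn)
    -- The next vertex `y` towards `c` is not `x'`, so moving to it increases the distance to `b`.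
    have hyb : A.T.dist y b = A.T.dist x b + 1 := by
      rcases A.adj_dist hy b with h1 | h1
      · have := A.closer_unique h hy hb h1
        subst this
        omega
      · exact h1
    have := ih hy.symm hyb hyc (by omega)
    omega

/-- The four-point condition for trees, by moving `a` towards `b`. -/
lemma four_point (a b c d : V) :
    A.T.dist a b + A.T.dist c d ≤
      max (A.T.dist a c + A.T.dist b d) (A.T.dist a d + A.T.dist b c) := by
  induction hn : A.T.dist a b generalizing a with
  | zero =>
    have : a = b := A.tree.connected.dist_eq_zero_iff.mp hn
    subst this
    have h1 := A.dist_tri c a d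
    rw [SimpleGraph.dist_comm (u := c) (v := a)] at h1
    omega
  | succ n ih =>
    obtain ⟨x, hx, hxb⟩ := A.exists_closer (x := a) (z := b) (by rintro rfl; simp at hn)
    have h1 := ih x (by omega)
    have h2 := A.dist_tri c a d
    rw [SimpleGraph.dist_comm (u := c) (v := a)] at h2
    rcases A.adj_dist hx c with hc | hc
    · rcases A.adj_dist hx d with hd | hd
      · omega
      · have := A.dist_across hx hxb hd
        omega
    · have := A.dist_across hx hxb hc
      omega

/-- A geodesic from `z` to one of the ends `u`, `v` can be taken through the point `m` of the
geodesic from `u` to `v`. -/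
lemma dist_geodesic {u v m : V} (hm : A.T.dist u m + A.T.dist v m = A.T.dist u v) (z : V) :
    A.T.dist z m + A.T.dist u m ≤ A.T.dist u z ∨ A.T.dist z m + A.T.dist v m ≤ A.T.dist v z := by
  have h := A.four_point z m u v
  rw [SimpleGraph.dist_comm (u := z) (v := u), SimpleGraph.dist_comm (u := z) (v := v),
    SimpleGraph.dist_comm (u := m) (v := u), SimpleGraph.dist_comm (u := m) (v := v)] at h
  omega

/-- For points `m`, `m'` of two geodesics, some geodesic between an end of the first and an end of
the second passes through both. -/
lemma dist_geodesic₂ {u v m u' v' m' : V} (hm : A.T.dist u m + A.T.dist v m = A.T.dist u v)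
    (hm' : A.T.dist u' m' + A.T.dist v' m' = A.T.dist u' v') :
    A.T.dist m m' + A.T.dist u m + A.T.dist u' m' ≤ A.T.dist u u' ∨
    A.T.dist m m' + A.T.dist u m + A.T.dist v' m' ≤ A.T.dist u v' ∨
    A.T.dist m m' + A.T.dist v m + A.T.dist u' m' ≤ A.T.dist v u' ∨
    A.T.dist m m' + A.T.dist v m + A.T.dist v' m' ≤ A.T.dist v v' := by
  have h1 := A.dist_geodesic hm m'
  have h2 := A.dist_geodesic hm' u
  have h3 := A.dist_geodesic hm' v
  rw [SimpleGraph.dist_comm (u := m') (v := m)] at h1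
  rw [SimpleGraph.dist_comm (u := u') (v := u), SimpleGraph.dist_comm (u := v') (v := u)] at h2
  rw [SimpleGraph.dist_comm (u := u') (v := v), SimpleGraph.dist_comm (u := v') (v := v)] at h3
  rcases h1 with h1 | h1
  · rcases h2 with h2 | h2 <;> omega
  · rcases h3 with h3 | h3 <;> omega

/-! ### The midpoint operations -/

/-- The two midpoints are placed symmetrically on the geodesic, at most one step apart, and if
they differ then `u • v` is black. -/
lemma mid (u v : V) :
    A.T.dist u (A.bull u v) = A.T.dist v (A.circ u v) ∧
    A.T.dist v (A.bull u v) = A.T.dist u (A.circ u v) ∧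
    A.T.dist u (A.bull u v) + A.T.dist v (A.bull u v) = A.T.dist u v ∧
    A.T.dist u (A.bull u v) ≤ A.T.dist v (A.bull u v) + 1 ∧
    A.T.dist v (A.bull u v) ≤ A.T.dist u (A.bull u v) + 1 ∧
    A.T.dist (A.bull u v) (A.circ u v) ≤ 1 ∧
    (A.T.dist (A.bull u v) (A.circ u v) = 0 ∨ A.colour (A.bull u v) = 0) := by
  have h1 := A.mid_spec u v
  have h2 := A.mid_close u v
  have c1 := A.dist_tri u (A.bull u v) v
  have c2 := A.dist_tri u (A.circ u v) v
  have c3 := A.dist_tri (A.bull u v) (A.circ u v) v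
  have c4 := A.dist_tri (A.circ u v) (A.bull u v) v
  have c5 := A.dist_tri u (A.bull u v) (A.circ u v)
  have c6 := A.dist_tri u (A.circ u v) (A.bull u v)
  simp only [SimpleGraph.dist_comm (u := A.circ u v) (v := A.bull u v),
    SimpleGraph.dist_comm (u := A.circ u v) (v := v),
    SimpleGraph.dist_comm (u := A.bull u v) (v := v)] at h1 c1 c2 c3 c4 c5 c6
  have h3 : A.T.dist (A.bull u v) (A.circ u v) = 0 ∨ A.colour (A.bull u v) = 0 := by
    rcases A.circ_le_bull u v with h | ⟨_, _, h⟩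
    · left; rw [h]; simp
    · right; exact A.colour_black h
  refine ⟨?_, ?_, ?_, ?_, ?_, h2, h3⟩ <;> clear h3 <;> omega

/-- The two midpoint pairs together are no further apart than the two end pairs. Both distances
on the left are bounded by maxima of expressions in the distances between the ends; the only
combination not settled by triangle inequalities uses the four-point condition and parity. -/
lemma mid_dist (u₁ u₂ v₁ v₂ : V) :
    A.T.dist (A.bull u₁ v₁) (A.bull u₂ v₂) + A.T.dist (A.circ u₁ v₁) (A.circ u₂ v₂) ≤
      A.T.dist u₁ u₂ + A.T.dist v₁ v₂ := by
  obtain ⟨e1, e2, e3, e4, e5, -, -⟩ := A.mid u₁ v₁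
  obtain ⟨f1, f2, f3, f4, f5, -, -⟩ := A.mid u₂ v₂
  have hα := A.dist_geodesic₂ e3 f3
  have hβ := A.dist_geodesic₂ (u := u₁) (v := v₁) (m := A.circ u₁ v₁) (u' := u₂) (v' := v₂)
    (m' := A.circ u₂ v₂) (by omega) (by omega)
  rw [← e1, ← e2, ← f1, ← f2] at hβ
  clear e1 e2 f1 f2
  have hQ : A.T.dist u₁ v₂ ≤ A.T.dist u₁ v₁ + A.T.dist v₁ v₂ ∧
      A.T.dist u₁ v₂ ≤ A.T.dist u₁ u₂ + A.T.dist u₂ v₂ :=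
    ⟨A.dist_tri u₁ v₁ v₂, A.dist_tri u₁ u₂ v₂⟩
  have hR : A.T.dist v₁ u₂ ≤ A.T.dist u₁ v₁ + A.T.dist u₁ u₂ ∧
      A.T.dist v₁ u₂ ≤ A.T.dist v₁ v₂ + A.T.dist u₂ v₂ := by
    have h1 := A.dist_tri v₁ u₁ u₂
    have h2 := A.dist_tri v₁ v₂ u₂
    rw [SimpleGraph.dist_comm (u := v₁) (v := u₁)] at h1
    rw [SimpleGraph.dist_comm (u := v₂) (v := u₂)] at h2
    exact ⟨h1, h2⟩
  have hx : A.T.dist u₁ u₂ ≤ A.T.dist u₁ v₁ + A.T.dist v₁ v₂ + A.T.dist u₂ v₂ := by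
    have := A.dist_tri u₁ v₁ u₂
    omega
  have hy : A.T.dist v₁ v₂ ≤ A.T.dist u₁ v₁ + A.T.dist u₁ u₂ + A.T.dist u₂ v₂ := by
    have := A.dist_tri v₁ u₂ v₂
    omega
  -- Four points alone leave room for a failure when the end pairs are at total distance at most
  -- one; parity excludes total distance one, and at distance zero the midpoints agree.
  have hcross : A.T.dist u₁ v₂ + A.T.dist v₁ u₂ ≤ A.T.dist u₁ u₂ + A.T.dist v₁ v₂ +
        2 * (A.T.dist u₁ (A.bull u₁ v₁) + A.T.dist v₂ (A.bull u₂ v₂)) ∧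
      A.T.dist u₁ v₂ + A.T.dist v₁ u₂ ≤ A.T.dist u₁ u₂ + A.T.dist v₁ v₂ +
        2 * (A.T.dist v₁ (A.bull u₁ v₁) + A.T.dist u₂ (A.bull u₂ v₂)) := by
    have q := A.four_point u₁ v₂ v₁ u₂
    rw [SimpleGraph.dist_comm (u := v₂) (v := u₂), SimpleGraph.dist_comm (u := v₂) (v := v₁),
      le_max_iff] at q
    rcases q with q | q
    · clear hα hβ hQ hR hx hy
      have hpar : (A.T.dist u₁ u₂ + A.T.dist v₁ v₂ + A.T.dist u₁ v₁ + A.T.dist u₂ v₂) % 2 = 0 := by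
        have p3 := A.dist_parity u₁ u₂
        have p4 := A.dist_parity v₁ v₂
        have p5 := A.dist_parity u₁ v₁
        have p6 := A.dist_parity u₂ v₂
        clear e3 e4 e5 f3 f4 f5 q
        omega
      by_cases h0 : A.T.dist u₁ u₂ + A.T.dist v₁ v₂ = 0
      · obtain rfl : u₁ = u₂ := A.tree.connected.dist_eq_zero_iff.mp (by omega)
        obtain rfl : v₁ = v₂ := A.tree.connected.dist_eq_zero_iff.mp (by omega)
        omega
      · constructor <;> omega
    · omega
  rcases hα with h | h | h | h <;> rcases hβ with h' | h' | h' | h' <;> (clear e4 e5 f4 f5; omega)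

/-- The distance between the two `•`-midpoints and that between the two `∘`-midpoints are either
almost equal, or even and two apart. -/
lemma mid_diff (u₁ u₂ v₁ v₂ : V) :
    let α := A.T.dist (A.bull u₁ v₁) (A.bull u₂ v₂)
    let β := A.T.dist (A.circ u₁ v₁) (A.circ u₂ v₂)
    (α ≤ β + 1 ∧ β ≤ α + 1) ∨ (α % 2 = 0 ∧ (α = β + 2 ∨ β = α + 2)) := by
  intro α β
  obtain ⟨-, -, -, -, -, e1, e2⟩ := A.mid u₁ v₁
  obtain ⟨-, -, -, -, -, f1, f2⟩ := A.mid u₂ v₂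
  have t1 := A.dist_tri (A.bull u₁ v₁) (A.circ u₁ v₁) (A.bull u₂ v₂)
  have t2 := A.dist_tri (A.circ u₁ v₁) (A.circ u₂ v₂) (A.bull u₂ v₂)
  have t3 := A.dist_tri (A.circ u₁ v₁) (A.bull u₁ v₁) (A.circ u₂ v₂)
  have t4 := A.dist_tri (A.bull u₁ v₁) (A.bull u₂ v₂) (A.circ u₂ v₂)
  have p := A.dist_parity (A.bull u₁ v₁) (A.bull u₂ v₂)
  rw [SimpleGraph.dist_comm (u := A.circ u₂ v₂) (v := A.bull u₂ v₂)] at t2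
  rw [SimpleGraph.dist_comm (u := A.circ u₁ v₁) (v := A.bull u₁ v₁)] at t3
  omega

/-! ### Distances between the filters `F(u)` and `F(v)` -/

/-- The nearest vertex of `F(u)` to `v ≠ u` is the neighbour of `u` towards `v`. -/
lemma nearest {u v a : V} (hu : u ∈ A.W) (huv : u ≠ v) (ha : memF A u a)
    (hmin : ∀ a', memF A u a' → A.T.dist a v ≤ A.T.dist a' v) :
    A.T.Adj u a ∧ A.T.dist u v = A.T.dist a v + 1 := by
  obtain ⟨y, hy, hyd⟩ := A.exists_closer huv
  have h1 := hmin y (Or.inr ⟨hu, hy⟩)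
  rcases ha with rfl | ⟨-, ha⟩
  · omega
  · refine ⟨ha, ?_⟩
    have := A.adj_dist ha v
    omega

/-- `θ_a` is the change of the distance to a vertex `z` lying in the direction of `a`. -/
lemma dist_theta {u a s z : V} (ha : A.T.Adj u a) (hz : A.T.dist u z = A.T.dist a z + 1)
    (hs : memF A u s) : (A.T.dist s z : ℝ) = A.T.dist u z + theta u a s := by
  have hne := ha.ne'
  unfold theta
  rcases hs with rfl | ⟨-, hs⟩
  · simp [hne.symm]
  · by_cases hsa : s = a
    · subst hsa
      simp [hne, hz]
    · have : A.T.dist s z = A.T.dist u z + 1 := by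
        rcases A.adj_dist hs z with h | h
        · exact absurd (A.closer_unique hs ha h hz) hsa
        · exact h
      simp [hsa, hs.ne', this]

/-- All of `F(v)` lies in the same direction from `u` as `v` does. -/
lemma toward {u v a t : V} (ha : A.T.Adj u a) (hv : A.T.dist u v = A.T.dist a v + 1)
    (hut : u ≠ t) (ht : memF A v t) : A.T.dist u t = A.T.dist a t + 1 := by
  rcases ht with rfl | ⟨-, ht⟩
  · exact hv
  · obtain ⟨y, hy, hyt⟩ := A.exists_closer hut
    -- If `t` is on the way to `v`, the step towards `t` is one towards `v`; otherwise the path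
    -- from `a` to `t` through `v` is short enough.
    have h1 := A.adj_dist ht u
    have h2 := A.dist_tri y t v
    have h3 := A.dist_tri a v t
    have h4 := dist_eq_one_iff_adj.mpr ht
    have h5 := A.adj_dist hy v
    have h6 := A.adj_dist ha t
    rw [SimpleGraph.dist_comm (u := t) (v := v)] at h2
    rw [SimpleGraph.dist_comm (u := t) (v := u), SimpleGraph.dist_comm (u := v) (v := u)] at h1
    rcases h1 with h1 | h1
    · have h7 : A.T.dist u v = A.T.dist y v + 1 := by omega
      rw [A.closer_unique ha hy hv h7]
      exact hyt
    · omega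

end AltTree

/-! ### Convex functions on the integers -/

section Convex

variable {h : ℤ → ℝ}

lemma dh_mono (hconv : ∀ t : ℤ, 0 ≤ h (t + 1) - 2 * h t + h (t - 1)) : Monotone (dh h) := by
  refine monotone_int_of_le_succ fun t => ?_
  have := hconv t
  simp only [dh, add_sub_cancel_right]
  linarith

lemma convex_spread (hconv : ∀ t : ℤ, 0 ≤ h (t + 1) - 2 * h t + h (t - 1))
    {p q : ℤ} (hpq : p ≤ q) (k : ℕ) : h p + h q ≤ h (p - k) + h (q + k) := by
  induction k with
  | zero => simp
  | succ k ih =>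
    have := dh_mono hconv (show p - k ≤ q + k + 1 by omega)
    simp only [dh, add_sub_cancel_right] at this
    have e1 : p - ((k + 1 : ℕ) : ℤ) = p - k - 1 := by push_cast; ring
    have e2 : q + ((k + 1 : ℕ) : ℤ) = q + k + 1 := by push_cast; ring
    rw [e1, e2]
    linarith

/-- A balanced pair minimizes `h p + h q` among the pairs with at least the same sum. -/
lemma convex_balanced (hmono : ∀ t : ℤ, h (t - 1) ≤ h t)
    (hconv : ∀ t : ℤ, 0 ≤ h (t + 1) - 2 * h t + h (t - 1))
    {p q x y : ℤ} (hpq : p ≤ q) (hqp : q ≤ p + 1) (hs : p + q ≤ x + y) :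
    h p + h q ≤ h x + h y := by
  have hm : Monotone h := monotone_int_of_le_succ fun t => by simpa using hmono (t + 1)
  wlog hxy : x ≤ y generalizing x y
  · have := this (x := y) (y := x) (by omega) (by omega)
    linarith
  rcases le_or_gt p x with hx | hx
  · have h1 := hm hx
    have h2 := hm (show q ≤ y by omega)
    linarith
  · obtain ⟨k, hk⟩ := Int.eq_ofNat_of_zero_le (show 0 ≤ p - x by omega)
    have h1 := convex_spread hconv hpq k
    have e1 : p - (k : ℤ) = x := by omega
    rw [e1] at h1
    have h2 := hm (show q + (k : ℤ) ≤ y by omega)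
    linarith

/-- For even `h` the pair may also consist of two consecutive even numbers, since `h` is affine
between these. -/
lemma convex_even_balanced (hmono : ∀ t : ℤ, h (t - 1) ≤ h t)
    (hconv : ∀ t : ℤ, 0 ≤ h (t + 1) - 2 * h t + h (t - 1))
    (heven : ∀ t : ℤ, Odd t → h t = (h (t - 1) + h (t + 1)) / 2)
    {p x y : ℤ} (hp : p % 2 = 0) (hs : p + (p + 2) ≤ x + y) :
    h p + h (p + 2) ≤ h x + h y := by
  have h1 := convex_balanced hmono hconv (p := p + 1) (q := p + 1) (x := x) (y := y)
    (by omega) (by omega) (by omega)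
  have h2 := heven (p + 1) (by rw [Int.odd_iff]; omega)
  have e1 : p + 1 - 1 = p := by ring
  have e2 : p + 1 + 1 = p + 2 := by ring
  rw [e1, e2] at h2
  linarith

end Convex

/-- The inequality needed for L-convexity, with `α`, `β` the distances between midpoints and `x`,
`y` those between ends. -/
lemma convex_mid {h : ℤ → ℝ} (hmono : ∀ t : ℤ, h (t - 1) ≤ h t)
    (hconv : ∀ t : ℤ, 0 ≤ h (t + 1) - 2 * h t + h (t - 1))
    (heven : ∀ t : ℤ, Odd t → h t = (h (t - 1) + h (t + 1)) / 2)
    {α β x y : ℕ} (hs : α + β ≤ x + y)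
    (hd : (α ≤ β + 1 ∧ β ≤ α + 1) ∨ (α % 2 = 0 ∧ (α = β + 2 ∨ β = α + 2))) :
    h α + h β ≤ h x + h y := by
  wlog hαβ : α ≤ β generalizing α β
  · have := this (α := β) (β := α) (by omega) (by omega) (by omega)
    linarith
  rcases hd with hd | hd
  · exact convex_balanced hmono hconv (by omega) (by omega) (by omega)
  · have hb : (β : ℤ) = α + 2 := by omega
    rw [hb]
    exact convex_even_balanced hmono hconv heven (by omega) (by omega)

/-! ### The theorem -/

/-- Theorem 2.14 (2).  Let `h : ℤ → ℝ` be nondecreasing, convex and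
even.  Then `h_T(u,v) := h(d(u,v))` is alternating L-convex on `T × T`; moreover, for
every `(u,v) ∈ T × T` with `D := d(u,v)`, letting `a ∈ F(u)` be nearest to `v` and
`b ∈ F(v)` nearest to `u`, for all `(s,t) ∈ F(u) × F(v)` the difference
`h_T(s,t) − h(D)` is given by the stated case formula. -/
theorem stmt6 {V : Type*} (A : AltTree V) (h : ℤ → ℝ)
    (hmono : ∀ t : ℤ, h (t - 1) ≤ h t)
    (hconv : ∀ t : ℤ, 0 ≤ h (t + 1) - 2 * h t + h (t - 1))
    (heven : ∀ t : ℤ, Odd t → h t = (h (t - 1) + h (t + 1)) / 2) :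
    IsLConvex2 A (fun u v => h (A.T.dist u v)) ∧
    ∀ u v a b : V,
      (memF A u a ∧ ∀ a', memF A u a' → A.T.dist a v ≤ A.T.dist a' v) →
      (memF A v b ∧ ∀ b', memF A v b' → A.T.dist b u ≤ A.T.dist b' u) →
      ∀ s t : V, memF A u s → memF A v t →
        ((u = v → u ∈ A.W →
            h (A.T.dist s t) - h (A.T.dist u v) = dh h 1 * (A.T.dist s t : ℝ)) ∧
         (u ∈ A.W → v ∈ A.B →
            h (A.T.dist s t) - h (A.T.dist u v) = dh h (A.T.dist u v) * theta u a s) ∧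
         (u ∈ A.B → v ∈ A.W →
            h (A.T.dist s t) - h (A.T.dist u v) = dh h (A.T.dist u v) * theta v b t) ∧
         (u ∈ A.W → v ∈ A.W → u ≠ v →
            h (A.T.dist s t) - h (A.T.dist u v) =
              dh h (A.T.dist u v) * (theta u a s + theta v b t)
                + d2h h (A.T.dist u v) * mu u v a b s t) ∧
         (u ∈ A.B → v ∈ A.B → h (A.T.dist s t) - h (A.T.dist u v) = 0)) := by
  refine ⟨fun u₁ u₂ v₁ v₂ =>
    convex_mid hmono hconv heven (A.mid_dist u₁ u₂ v₁ v₂) (A.mid_diff u₁ u₂ v₁ v₂), ?_⟩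
  rintro u v a b ⟨ha, hamin⟩ ⟨hb, hbmin⟩ s t hs ht
  -- An element of the filter of a black vertex is that vertex.
  have hblack : ∀ {x y : V}, x ∈ A.B → memF A x y → y = x := by
    rintro x y hx (rfl | ⟨hw, -⟩)
    · rfl
    · exact absurd hw (A.not_mem_W hx)
  have hodd : ∀ {x y : V}, x ∈ A.W → y ∈ A.B →
      h (A.T.dist x y + 1) - h (A.T.dist x y) = dh h (A.T.dist x y) := by
    intro x y hx hy
    have p := A.dist_parity x y
    rw [A.colour_white hx, A.colour_black hy] at p
    have := heven (A.T.dist x y) (by rw [Int.odd_iff]; omega)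
    simp only [dh]
    linarith
  -- The two mixed cases are mirror images of each other.
  have hmix : ∀ {x y c r : V}, x ∈ A.W → y ∈ A.B → memF A x c →
      (∀ c', memF A x c' → A.T.dist c y ≤ A.T.dist c' y) → memF A x r →
      h (A.T.dist r y) - h (A.T.dist x y) = dh h (A.T.dist x y) * theta x c r := by
    intro x y c r hx hy hc hmin hr
    have hxy : x ≠ y := by rintro rfl; exact A.not_mem_W hy hx
    obtain ⟨hadj, hd⟩ := A.nearest hx hxy hc hmin
    have e := A.dist_theta hadj hd hr
    have o := hodd hx hy
    unfold theta at e ⊢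
    split_ifs at e ⊢
    · have e' : (A.T.dist r y : ℤ) = A.T.dist x y - 1 := by
        have : (A.T.dist r y : ℝ) + 1 = A.T.dist x y := by linarith
        have : A.T.dist r y + 1 = A.T.dist x y := by exact_mod_cast this
        omega
      rw [e']; simp only [dh]; ring
    · have e' : A.T.dist r y = A.T.dist x y := by
        have : (A.T.dist r y : ℝ) = A.T.dist x y := by linarith
        exact_mod_cast this
      rw [e']; ring
    · have e' : (A.T.dist r y : ℤ) = A.T.dist x y + 1 := by exact_mod_cast e
      rw [e', o]; ring
  refine ⟨?_, ?_, ?_, ?_, ?_⟩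
  · rintro rfl hu
    have hle : ∀ {r}, memF A u r → A.T.dist u r ≤ 1 := by
      rintro r (rfl | ⟨-, h⟩)
      · simp
      · exact (dist_eq_one_iff_adj.mpr h).le
    have h1 := hle hs
    have h2 := hle ht
    have h3 := A.dist_tri s u t
    rw [SimpleGraph.dist_comm (u := s) (v := u)] at h3
    have h4 : A.T.dist s t ≤ 2 := by omega
    have h5 := heven 1 (by decide)
    norm_num at h5
    rw [SimpleGraph.dist_self]
    simp only [dh]
    interval_cases A.T.dist s t <;> norm_num <;> linarith
  · intro hu hv
    rw [hblack hv ht]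
    exact hmix hu hv ha hamin hs
  · intro hu hv
    rw [hblack hu hs, SimpleGraph.dist_comm (u := u) (v := t),
      SimpleGraph.dist_comm (u := u) (v := v)]
    exact hmix hv hu hb hbmin ht
  · intro hu hv huv
    obtain ⟨hadja, hda⟩ := A.nearest hu huv ha hamin
    obtain ⟨hadjb, hdb⟩ := A.nearest hv huv.symm hb hbmin
    have pD := A.dist_parity u v
    rw [A.colour_white hu, A.colour_white hv] at pD
    -- `t` is black or equal to `v`, hence different from `u`.
    have hut : u ≠ t := by
      rintro rfl
      rcases ht with h' | ⟨-, h'⟩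
      · exact huv h'
      · have := dist_eq_one_iff_adj.mpr h'.symm
        omega
    have e1 := A.dist_theta hadja (A.toward hadja hda hut ht) hs
    have e2 := A.dist_theta hadjb hdb ht
    rw [SimpleGraph.dist_comm (u := t) (v := u), SimpleGraph.dist_comm (u := v) (v := u)] at e2
    rw [e2] at e1
    clear e2
    have hpos : 2 ≤ A.T.dist u v := by omega
    have o1 := heven (A.T.dist u v - 1) (by rw [Int.odd_iff]; omega)
    have o2 := heven (A.T.dist u v + 1) (by rw [Int.odd_iff]; omega)
    have e3 : (A.T.dist u v : ℤ) - 1 - 1 = A.T.dist u v - 2 := by ring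
    have e4 : (A.T.dist u v : ℤ) + 1 + 1 = A.T.dist u v + 2 := by ring
    rw [e3, sub_add_cancel] at o1
    rw [e4, add_sub_cancel_right] at o2
    have hau := hadja.ne'
    have hbv := hadjb.ne.symm
    -- The difference of the distances determines the difference of the values of `h`.
    have key : ∀ k : ℤ, (A.T.dist s t : ℝ) = A.T.dist u v + k →
        h (A.T.dist s t) = h (A.T.dist u v + k) := by
      intro k hk
      congr 1
      exact_mod_cast hk
    generalize A.T.dist u v = D at *
    generalize A.T.dist s t = E at *
    unfold theta at e1 ⊢
    unfold mu
    simp only [dh, d2h]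
    by_cases hsa : s = a
    · by_cases htb : t = b
      · have := key (-2) (by simp [hsa, htb, hau, hbv] at e1; push_cast; linarith)
        simp [hsa, htb, hau, hbv, this, ← sub_eq_add_neg]; linarith
      · by_cases htv : t = v
        · have := key (-1) (by simp [hsa, htv, hau, hbv.symm] at e1; push_cast; linarith)
          simp [hsa, htv, hau, hbv.symm, this, ← sub_eq_add_neg]
        · have := key 0 (by simp [hsa, htb, htv, hau] at e1; simp [e1])
          simp [hsa, htb, htv, hau, this]
    · by_cases hsu : s = u
      · by_cases htb : t = b
        · have := key (-1) (by simp [hsu, htb, hau.symm, hbv] at e1; push_cast; linarith)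
          simp [hsu, htb, hau.symm, hbv, this, ← sub_eq_add_neg]
        · by_cases htv : t = v
          · have := key 0 (by simp [hsu, htv, hau.symm, hbv.symm] at e1; simp [e1])
            simp [hsu, htv, hau.symm, hbv.symm, this]
          · have := key 1 (by simp [hsu, htb, htv, hau.symm] at e1; push_cast; linarith)
            simp [hsu, htb, htv, hau.symm, Ne.symm htv, this]; linarith
      · by_cases htb : t = b
        · have := key 0 (by simp [hsa, hsu, htb, hbv] at e1; simp [e1])
          simp [hsa, hsu, htb, hbv, this]
        · by_cases htv : t = v
          · have := key 1 (by simp [hsa, hsu, htv, hbv.symm] at e1; push_cast; linarith)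
            simp [hsa, hsu, htv, hbv.symm, Ne.symm hsu, this]; linarith
          · have := key 2 (by simp [hsa, hsu, htb, htv] at e1; push_cast; linarith)
            simp [hsa, hsu, htb, htv, this]; linarith
  · intro hu hv
    rw [hblack hu hs, hblack hv ht, sub_self]
end

section
/- The minimum total cost a_f over all feasible multiflows f in the network N equals the maximum of D-val(p) over all potentials p. Moreover, there exists a proper half-integral potential attaining this maximum. -/
/-!
The theorem is linear programming duality for the path formulation of the multiflow problem,
combined with a rounding argument on the star `𝒯`.

*Weak duality* (`weak_duality`). Along a path joining two terminals `s ≠ t` the triangle inequality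
for `D` gives `p_s(s) + p_t(t) ≤ Σ D(p_i, p_j)`; summing over the paths of a feasible multiflow and
using the capacities yields `D-val(p) ≤ a_f`.

*Strong duality* (`exists_multiflow`). By Farkas' lemma (`farkas_nonneg`, proved by
Fourier–Motzkin elimination), either there is a feasible multiflow of cost at most `γ`, or there
are multipliers `y` on terminals, `l` on edges and `z ≥ 0` on the cost constraint with
`y_s + y_t ≤ l(W) + z a(W)` on all `S`-paths `W` and `Σ r y - Σ c l > z γ`. With `d` the
shortest-path distance for the weight `l + z a`, the points `p_i = (y_s - d(s, i))⁺ e_s` lie on the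
star: two branches `s ≠ t` cannot both be positive, as `y_s + y_t ≤ d(s, t)`. Moreover
`D(p_i, p_j) ≤ l(ij) + z a(ij)` on edges (`dualPot_edge`). If `z > 0`, the same construction after
division by `z` gives a potential of value above `γ`. If `z = 0`, it gives one of positive value
for zero edge costs, which the cut condition excludes (`Dval_bound`, by decomposing each coordinate
of a potential into its level sets).

*Half-integrality* (`exists_proper_half`). Truncating each branch of the star at its terminal is
nonexpansive, so it makes a potential proper without decreasing `D-val`. The rounding
`rnd α x = (⌊x + α⌋ + ⌈x - α⌉) / 2` is monotone, odd and commutes with integer translations; hence,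
the costs being integers, it preserves the inequalities `|x - x'| ≤ a` and `x + x' ≤ a` and their
reverses, on whose sides the summands of `D-val` are linear. As the mean of `rnd α x` over
`α ∈ [0, 1]` is `x`, the mean of `D-val` over the rounded potentials is the original value, so some
rounding does at least as well.

*Attainment* (`exists_dual_max`). The values of `D-val` at half-integral potentials are
half-integers, bounded above by the cut condition, so they have a maximum, and by the previous step
it dominates all potentials. Taking `γ` to be this maximum closes the proof.
-/

open SimpleGraph Finset

/-- A multiflow in the network `(V, G, S, c)`: a finite family of `S`-paths
(paths connecting two distinct terminals of `S`) with nonnegative flow values,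
obeying the edge capacities `c`. -/
structure Multiflow {V : Type*} [DecidableEq V] (G : SimpleGraph V) (S : Finset V)
    (c : Sym2 V → ℝ) where
  N : ℕ
  src : Fin N → V
  dst : Fin N → V
  walk : (p : Fin N) → G.Walk (src p) (dst p)
  isPath : ∀ p, (walk p).IsPath
  srcS : ∀ p, src p ∈ S
  dstS : ∀ p, dst p ∈ S
  srcdst : ∀ p, src p ≠ dst p
  lam : Fin N → ℝ
  lam_nonneg : ∀ p, 0 ≤ lam p
  cap : ∀ e ∈ G.edgeSet, (∑ p, if e ∈ (walk p).edges then lam p else 0) ≤ c e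

namespace Multiflow

variable {V : Type*} [DecidableEq V] {G : SimpleGraph V} {S : Finset V} {c : Sym2 V → ℝ}

/-- The total flow `f(e)` through an edge `e`. -/
def flowOn (M : Multiflow G S c) (e : Sym2 V) : ℝ :=
  ∑ p, if e ∈ (M.walk p).edges then M.lam p else 0

/-- The total flow value `f(s)` of the paths having `s` as an endpoint. -/
def termVal (M : Multiflow G S c) (s : V) : ℝ :=
  ∑ p, if M.src p = s ∨ M.dst p = s then M.lam p else 0

/-- Feasibility of a multiflow with respect to the demands `r`: `f(s) ≥ r(s)`. -/
def Feasible (M : Multiflow G S c) (r : V → ℝ) : Prop :=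
  ∀ s ∈ S, r s ≤ M.termVal s

/-- The total cost `a_f = Σ_e a(e) f(e)` of a multiflow. -/
noncomputable def cost [Fintype V] [DecidableRel G.Adj]
    (M : Multiflow G S c) (a : Sym2 V → ℝ) : ℝ :=
  ∑ e ∈ G.edgeFinset, a e * M.flowOn e

end Multiflow

open Classical in
/-- The capacity `c(δX)` of the cut `δX`. -/
noncomputable def cutCap {V : Type*} [Fintype V] [DecidableEq V]
    (G : SimpleGraph V) [DecidableRel G.Adj] (c : Sym2 V → ℝ) (X : Finset V) : ℝ :=
  ∑ e ∈ G.edgeFinset,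
    if Sym2.lift ⟨fun i j => ((i ∈ X ∧ j ∉ X) ∨ (j ∈ X ∧ i ∉ X) : Prop),
        fun i j => propext (by tauto)⟩ e then c e else 0

/-- A point of the star `𝒯 = ∪_{s ∈ S} ℝ≥0·e_s ⊆ ℝ^S`: a nonnegative vector supported
on at most one terminal axis. -/
def TPoint {V : Type*} (S : Finset V) (q : V → ℝ) : Prop :=
  (∀ u, 0 ≤ q u) ∧ (∀ u, q u ≠ 0 → u ∈ S) ∧ ∀ u u', q u ≠ 0 → q u' ≠ 0 → u = u'

/-- The metric `D` of the star `𝒯` (for points of `𝒯`, it is the `l_1`-distance). -/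
def Dmet {V : Type*} (S : Finset V) (q q' : V → ℝ) : ℝ := ∑ u ∈ S, |q u - q' u|

/-- A potential: a tuple `p = (p_i)_{i ∈ V}` of points of `𝒯` with `p_s` on the axis
`ℝ≥0·e_s` for every terminal `s ∈ S`. -/
def IsPotential {V : Type*} (S : Finset V) (p : V → V → ℝ) : Prop :=
  (∀ i, TPoint S (p i)) ∧ ∀ s ∈ S, ∀ u, p s u ≠ 0 → u = s

/-- A half-integral potential. -/
def HalfIntegral {V : Type*} (p : V → V → ℝ) : Prop :=
  ∀ i u, ∃ z : ℤ, p i u = (z : ℝ) / 2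

/-- A proper potential: `D(0, p_i) ≤ D(0, p_s)` whenever `p_i ∈ 𝒯_s`. -/
def ProperPotential {V : Type*} (S : Finset V) (p : V → V → ℝ) : Prop :=
  ∀ i, ∀ s ∈ S, (∀ u, p i u ≠ 0 → u = s) → Dmet S 0 (p i) ≤ Dmet S 0 (p s)

/-- The dual objective
`D-val(p) = Σ_{s ∈ S} r(s)·D(0, p_s) − Σ_{ij ∈ E} c(ij)·(D(p_i, p_j) − a(ij))⁺`. -/
noncomputable def Dval {V : Type*} [Fintype V] [DecidableEq V]
    (G : SimpleGraph V) [DecidableRel G.Adj] (S : Finset V)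
    (c a : Sym2 V → ℝ) (r : V → ℝ) (p : V → V → ℝ) : ℝ :=
  (∑ s ∈ S, r s * Dmet S 0 (p s)) -
    ∑ e ∈ G.edgeFinset,
      c e * max 0 ((Sym2.lift ⟨fun i j => Dmet S (p i) (p j),
        fun i j => Finset.sum_congr rfl fun u _ => abs_sub_comm _ _⟩ e) - a e)

/-! ### Linear programming: Farkas' lemma -/

/-- Finitely many lower bounds, each below finitely many upper bounds, have a common
separating value. -/
lemma exists_between_families {κ : Type*} [Fintype κ] (P Q : κ → Prop) (l u : κ → ℝ)
    (h : ∀ j k, P j → Q k → l j ≤ u k) :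
    ∃ t, (∀ j, P j → l j ≤ t) ∧ ∀ k, Q k → t ≤ u k := by
  classical
  by_cases hP : ((univ : Finset κ).filter P).Nonempty
  · refine ⟨((univ : Finset κ).filter P).sup' hP l, fun j hj => ?_, fun k hk => ?_⟩
    · exact Finset.le_sup' l (by simpa using hj)
    · exact Finset.sup'_le hP l fun j hj => h j k (by simpa using hj) hk
  · have hP' : ∀ j, ¬ P j := fun j hj => hP ⟨j, by simpa using hj⟩
    by_cases hQ : ((univ : Finset κ).filter Q).Nonempty
    · exact ⟨((univ : Finset κ).filter Q).inf' hQ u, fun j hj => (hP' j hj).elim,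
        fun k hk => Finset.inf'_le u (by simpa using hk)⟩
    · exact ⟨0, fun j hj => (hP' j hj).elim,
        fun k hk => (hQ ⟨k, by simpa using hk⟩).elim⟩

/-- Farkas' lemma for systems `A x ≤ b` in free variables, by Fourier–Motzkin elimination:
the new system consists of the nonnegative combinations of rows that cancel the first
variable. -/
lemma farkas_fin (n : ℕ) : ∀ {κ : Type*} [Fintype κ] (A : κ → Fin n → ℝ) (b : κ → ℝ),
    (∀ w : κ → ℝ, (∀ k, 0 ≤ w k) → (∀ i, ∑ k, w k * A k i = 0) → 0 ≤ ∑ k, w k * b k) →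
    ∃ x : Fin n → ℝ, ∀ k, ∑ i, A k i * x i ≤ b k := by
  classical
  induction n with
  | zero =>
    intro κ _ A b h
    refine ⟨0, fun k => ?_⟩
    have := h (Pi.single k 1) (fun j => by
      by_cases hj : j = k
      · subst hj; simp
      · simp [hj]) (fun i => i.elim0)
    simpa [Pi.single_apply] using this
  | succ n ih =>
    intro κ _ A b h
    -- `m k'` is the vector of multipliers producing the row `k'` of the reduced system
    let m : κ ⊕ κ × κ → κ → ℝ := fun k' k => match k' with
      | .inl j => if A j 0 = 0 then (if k = j then 1 else 0) else 0
      | .inr (i, j) => if A i 0 > 0 ∧ A j 0 < 0 then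
          (if k = j then A i 0 else 0) + (if k = i then - A j 0 else 0) else 0
    have hm0 : ∀ k' k, 0 ≤ m k' k := by
      rintro (j | ⟨i, j⟩) k
      · simp only [m]; split_ifs <;> norm_num
      · simp only [m]; split_ifs <;> linarith
    have hm1 : ∀ k', ∑ k, m k' k * A k 0 = 0 := by
      rintro (j | ⟨i, j⟩)
      · by_cases hj : A j 0 = 0 <;> simp [m, hj]
      · by_cases hij : A i 0 > 0 ∧ A j 0 < 0
        · simp only [m, if_pos hij, add_mul, Finset.sum_add_distrib, ite_mul, zero_mul,
            Finset.sum_ite_eq', Finset.mem_univ, if_true]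
          ring
        · simp only [m, if_neg hij, zero_mul, Finset.sum_const_zero]
    obtain ⟨x, hx⟩ := ih (fun k' (i : Fin n) => ∑ k, m k' k * A k i.succ)
      (fun k' => ∑ k, m k' k * b k) (by
        intro w hw hw0
        have swap : ∀ f : κ → ℝ, ∑ k, (∑ k', w k' * m k' k) * f k =
            ∑ k', w k' * ∑ k, m k' k * f k := by
          intro f
          simp only [Finset.sum_mul, Finset.mul_sum]
          rw [Finset.sum_comm]
          simp only [mul_assoc]
        have := h (fun k => ∑ k', w k' * m k' k)
          (fun k => Finset.sum_nonneg fun k' _ => mul_nonneg (hw k') (hm0 k' k))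
          (fun i => by
            rw [swap]
            refine Fin.cases ?_ (fun i => ?_) i
            · simp [hm1]
            · exact hw0 i)
        rwa [swap] at this)
    set β : κ → ℝ := fun k => b k - ∑ i : Fin n, A k i.succ * x i with hβ
    have hx' : ∀ k', 0 ≤ ∑ k, m k' k * β k := by
      intro k'
      have := hx k'
      simp only [hβ, mul_sub, Finset.sum_sub_distrib, Finset.mul_sum]
      simp only [Finset.sum_mul] at this
      rw [Finset.sum_comm] at this
      simp only [mul_assoc] at this
      linarith
    obtain ⟨t, ht1, ht2⟩ := exists_between_families (fun k => A k 0 < 0) (fun k => A k 0 > 0)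
      (fun k => β k / A k 0) (fun k => β k / A k 0) (by
        intro j i hj hi
        have := hx' (.inr (i, j))
        have hij : A i 0 > 0 ∧ A j 0 < 0 := ⟨hi, hj⟩
        simp only [m, if_pos hij, add_mul, Finset.sum_add_distrib, ite_mul, zero_mul,
            Finset.sum_ite_eq', Finset.mem_univ, if_true] at this
        rw [div_le_iff_of_neg hj, div_mul_eq_mul_div, div_le_iff₀ hi]
        linarith)
    refine ⟨Fin.cons t x, fun k => ?_⟩
    rw [Fin.sum_univ_succ]
    simp only [Fin.cons_zero, Fin.cons_succ]
    have hk : A k 0 * t ≤ β k := by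
      rcases lt_trichotomy (A k 0) 0 with h0 | h0 | h0
      · have := ht1 k h0
        rw [div_le_iff_of_neg h0] at this
        linarith
      · have := hx' (.inl k)
        simp [m, h0] at this
        simpa [h0] using this
      · have := ht2 k h0
        rw [le_div_iff₀ h0] at this
        linarith
    simp only [hβ] at hk
    linarith

/-- Farkas' lemma for systems `A x ≤ b`, `x ≥ 0`. -/
lemma farkas_nonneg {ι κ : Type*} [Fintype ι] [Fintype κ] (A : κ → ι → ℝ) (b : κ → ℝ)
    (h : ∀ w : κ → ℝ, (∀ k, 0 ≤ w k) → (∀ i, 0 ≤ ∑ k, w k * A k i) → 0 ≤ ∑ k, w k * b k) :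
    ∃ x : ι → ℝ, (∀ i, 0 ≤ x i) ∧ ∀ k, ∑ i, A k i * x i ≤ b k := by
  classical
  let e := Fintype.equivFin ι
  obtain ⟨x, hx⟩ := farkas_fin (Fintype.card ι)
    (κ := κ ⊕ ι) (fun k i => Sum.elim (fun k => A k (e.symm i))
      (fun j => if e j = i then -1 else 0) k) (Sum.elim b 0) (by
      intro w hw hw0
      have := h (fun k => w (.inl k)) (fun k => hw _) (fun i => by
        have := hw0 (e i)
        simp [Fintype.sum_sum_type] at this
        have h2 := hw (.inr i)
        linarith)
      simpa [Fintype.sum_sum_type] using this)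
  refine ⟨fun i => x (e i), fun i => ?_, fun k => ?_⟩
  · have := hx (.inr i)
    simpa using this
  · have := hx (.inl k)
    simp only [Sum.elim_inl] at this
    rw [← Equiv.sum_comp e] at this
    simpa using this

/-! ### Lengths of walks -/

section Walks

variable {V : Type*} {G : SimpleGraph V}

/-- The length of a walk with respect to an edge weight `w`. -/
def wlen (w : Sym2 V → ℝ) {u v : V} (W : G.Walk u v) : ℝ := (W.edges.map w).sum

lemma wlen_nil (w : Sym2 V → ℝ) (u : V) : wlen w (Walk.nil : G.Walk u u) = 0 := by
  simp [wlen]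

lemma wlen_cons (w : Sym2 V → ℝ) {u v x : V} (h : G.Adj u v) (W : G.Walk v x) :
    wlen w (Walk.cons h W) = w s(u, v) + wlen w W := by
  simp [wlen]

lemma wlen_append (w : Sym2 V → ℝ) {u v x : V} (W : G.Walk u v) (W' : G.Walk v x) :
    wlen w (W.append W') = wlen w W + wlen w W' := by
  simp [wlen, Walk.edges_append]

lemma wlen_reverse (w : Sym2 V → ℝ) {u v : V} (W : G.Walk u v) :
    wlen w W.reverse = wlen w W := by
  simp [wlen, Walk.edges_reverse]

lemma wlen_nonneg {w : Sym2 V → ℝ} (hw : ∀ e, 0 ≤ w e) {u v : V} (W : G.Walk u v) :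
    0 ≤ wlen w W := by
  unfold wlen
  exact List.sum_nonneg (by simpa using fun e _ => hw e)

lemma wlen_path [Fintype V] [DecidableEq V] [DecidableRel G.Adj]
    (w : Sym2 V → ℝ) {u v : V} {W : G.Walk u v} (hW : W.IsPath) :
    wlen w W = ∑ e ∈ G.edgeFinset, if e ∈ W.edges then w e else 0 := by
  have hnd : W.edges.Nodup := hW.isTrail.edges_nodup
  rw [wlen, ← List.sum_toFinset _ hnd, ← Finset.sum_filter]
  refine Finset.sum_congr ?_ fun _ _ => rfl
  ext e
  simp only [List.mem_toFinset, Finset.mem_filter, mem_edgeFinset]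
  exact ⟨fun h => ⟨Walk.edges_subset_edgeSet W h, h⟩, fun h => h.2⟩

/-- Shortcutting a walk to a path does not increase its length. -/
lemma wlen_bypass_le [DecidableEq V] {w : Sym2 V → ℝ} (hw : ∀ e, 0 ≤ w e) {u v : V}
    (W : G.Walk u v) : wlen w W.bypass ≤ wlen w W := by
  have hnd : W.bypass.edges.Nodup := (W.bypass_isPath).isTrail.edges_nodup
  obtain ⟨l, hl, hsub⟩ := (hnd.subperm (W.edges_bypass_subset_edges))
  have h1 : (l.map w).sum = (W.bypass.edges.map w).sum := (hl.map w).sum_eq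
  have h2 : (l.map w).sum ≤ (W.edges.map w).sum :=
    List.Sublist.sum_le_sum (hsub.map w) (by simpa using fun e _ => hw e)
  unfold wlen
  linarith

end Walks

/-! ### The star metric -/

section Star

variable {V : Type*} {S : Finset V}

/-- Coordinates on the star: a point of `𝒯` is `x · e_s` for some `x ≥ 0`. -/
lemma TPoint.exists_eq [DecidableEq V] [Nonempty V] {q : V → ℝ} (hq : TPoint S q) :
    ∃ s x, 0 ≤ x ∧ (x ≠ 0 → s ∈ S) ∧ q = fun u => if u = s then x else 0 := by
  by_cases h : ∃ s, q s ≠ 0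
  · obtain ⟨s, hs⟩ := h
    refine ⟨s, q s, hq.1 s, fun _ => hq.2.1 s hs, ?_⟩
    ext u
    by_cases hu : u = s
    · simp [hu]
    · rw [if_neg hu]
      by_contra h'
      exact hu (hq.2.2 u s h' hs)
  · push Not at h
    obtain ⟨s⟩ := ‹Nonempty V›
    exact ⟨s, 0, le_rfl, fun h => (h rfl).elim, by ext u; simp [h u]⟩

lemma Dmet_single_same [DecidableEq V] {s : V} {x x' : ℝ} (hx : x ≠ 0 → s ∈ S)
    (hx' : x' ≠ 0 → s ∈ S) :
    Dmet S (fun u => if u = s then x else 0) (fun u => if u = s then x' else 0) = |x - x'| := by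
  unfold Dmet
  have : ∀ u, |(if u = s then x else 0) - (if u = s then x' else 0)| =
      if u = s then |x - x'| else 0 := by
    intro u; split_ifs <;> simp
  simp only [this, Finset.sum_ite_eq']
  split_ifs with h
  · rfl
  · have h1 : x = 0 := by by_contra h0; exact h (hx h0)
    have h2 : x' = 0 := by by_contra h0; exact h (hx' h0)
    simp [h1, h2]

lemma Dmet_single_ne [DecidableEq V] {s s' : V} {x x' : ℝ} (hs : s ≠ s') (h0 : 0 ≤ x)
    (h0' : 0 ≤ x') (hx : x ≠ 0 → s ∈ S) (hx' : x' ≠ 0 → s' ∈ S) :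
    Dmet S (fun u => if u = s then x else 0) (fun u => if u = s' then x' else 0) = x + x' := by
  unfold Dmet
  have : ∀ u, |(if u = s then x else 0) - (if u = s' then x' else 0)| =
      (if u = s then x else 0) + (if u = s' then x' else 0) := by
    intro u
    by_cases h1 : u = s
    · have h2 : u ≠ s' := h1 ▸ hs
      simp [h1, hs, abs_of_nonneg h0]
    · by_cases h2 : u = s'
      · simp [h2, hs.symm, abs_of_nonneg h0']
      · simp [h1, h2]
  simp only [this, Finset.sum_add_distrib, Finset.sum_ite_eq']
  congr 1
  · split_ifs with h
    · rfl
    · by_contra hne; exact h (hx (Ne.symm hne))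
  · split_ifs with h
    · rfl
    · by_contra hne; exact h (hx' (Ne.symm hne))

lemma Dmet_triangle (q q' q'' : V → ℝ) : Dmet S q q'' ≤ Dmet S q q' + Dmet S q' q'' := by
  unfold Dmet
  rw [← Finset.sum_add_distrib]
  exact Finset.sum_le_sum fun u _ => abs_sub_le _ _ _

lemma Dmet_nonneg (q q' : V → ℝ) : 0 ≤ Dmet S q q' :=
  Finset.sum_nonneg fun _ _ => abs_nonneg _

lemma Dmet_zero_terminal {p : V → V → ℝ} (hp : IsPotential S p)
    {s : V} (hs : s ∈ S) : Dmet S 0 (p s) = p s s := by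
  unfold Dmet
  rw [Finset.sum_eq_single s]
  · simp [abs_of_nonneg ((hp.1 s).1 s)]
  · intro u _ hu
    have : p s u = 0 := by by_contra h; exact hu (hp.2 s hs u h)
    simp [this]
  · intro h; exact (h hs).elim

lemma Dmet_terminals {p : V → V → ℝ} (hp : IsPotential S p)
    {s t : V} (hs : s ∈ S) (ht : t ∈ S) (hst : s ≠ t) :
    Dmet S (p s) (p t) = p s s + p t t := by
  classical
  have h : ∀ s ∈ S, p s = fun u => if u = s then p s s else 0 := by
    intro s hs
    ext u
    by_cases hu : u = s
    · simp [hu]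
    · rw [if_neg hu]
      by_contra h; exact hu (hp.2 s hs u h)
  rw [h s hs, h t ht, Dmet_single_ne hst ((hp.1 s).1 s) ((hp.1 t).1 t) (fun _ => hs) (fun _ => ht)]
  simp

/-- The pulled-back metric `D(p_i, p_j)` as a function of the edge `ij`. -/
def Dedge (S : Finset V) (p : V → V → ℝ) (e : Sym2 V) : ℝ :=
  Sym2.lift ⟨fun i j => Dmet S (p i) (p j),
    fun i j => Finset.sum_congr rfl fun u _ => abs_sub_comm _ _⟩ e

lemma Dedge_mk (p : V → V → ℝ) (i j : V) : Dedge S p s(i, j) = Dmet S (p i) (p j) := rfl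

lemma Dval_eq [Fintype V] [DecidableEq V] (G : SimpleGraph V) [DecidableRel G.Adj]
    (c a : Sym2 V → ℝ) (r : V → ℝ) {p : V → V → ℝ} (hp : IsPotential S p) :
    Dval G S c a r p = (∑ s ∈ S, r s * p s s) -
      ∑ e ∈ G.edgeFinset, c e * max 0 (Dedge S p e - a e) := by
  unfold Dval
  congr 1
  exact Finset.sum_congr rfl fun s hs => by rw [Dmet_zero_terminal hp hs]

lemma Dmet_le_wlen {G : SimpleGraph V} (p : V → V → ℝ) {u v : V} (W : G.Walk u v) :
    Dmet S (p u) (p v) ≤ wlen (Dedge S p) W := by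
  induction W with
  | nil => simp [wlen_nil, Dmet]
  | @cons a b c h W ih =>
    rw [wlen_cons, Dedge_mk]
    have := Dmet_triangle (S := S) (p a) (p b) (p c)
    linarith

end Star

/-! ### Weak duality -/

section Weak

variable {V : Type*} [Fintype V] [DecidableEq V] {G : SimpleGraph V} [DecidableRel G.Adj]
  {S : Finset V}

/-- The total weight of a multiflow, computed edgewise and pathwise. -/
lemma Multiflow.sum_edge_eq_sum_path {c : Sym2 V → ℝ} (M : Multiflow G S c) (w : Sym2 V → ℝ) :
    ∑ e ∈ G.edgeFinset, w e * M.flowOn e = ∑ P, M.lam P * wlen w (M.walk P) := by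
  simp only [Multiflow.flowOn, Finset.mul_sum]
  rw [Finset.sum_comm]
  refine Finset.sum_congr rfl fun P _ => ?_
  rw [wlen_path w (M.isPath P), Finset.mul_sum]
  refine Finset.sum_congr rfl fun e _ => ?_
  split_ifs <;> ring

lemma weak_duality {c a : Sym2 V → ℝ} {r : V → ℝ} (M : Multiflow G S c) (hM : M.Feasible r)
    {p : V → V → ℝ} (hp : IsPotential S p) :
    Dval G S c a r p ≤ M.cost a := by
  rw [Dval_eq G c a r hp]
  have h1 : ∑ s ∈ S, r s * p s s ≤ ∑ s ∈ S, M.termVal s * p s s :=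
    Finset.sum_le_sum fun s hs => mul_le_mul_of_nonneg_right (hM s hs) ((hp.1 s).1 s)
  have h2 : ∑ s ∈ S, M.termVal s * p s s =
      ∑ P, M.lam P * Dmet S (p (M.src P)) (p (M.dst P)) := by
    simp only [Multiflow.termVal, Finset.sum_mul]
    rw [Finset.sum_comm]
    refine Finset.sum_congr rfl fun P _ => ?_
    rw [Dmet_terminals hp (M.srcS P) (M.dstS P) (M.srcdst P)]
    have : ∀ s, (if M.src P = s ∨ M.dst P = s then M.lam P else 0) * p s s =
        (if M.src P = s then M.lam P * p s s else 0) +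
        (if M.dst P = s then M.lam P * p s s else 0) := by
      intro s
      have := M.srcdst P
      by_cases h1 : M.src P = s
      · have h2 : M.dst P ≠ s := fun h2 => this (h1.trans h2.symm)
        simp [h1, h2]
      · simp [h1]
    simp only [this, Finset.sum_add_distrib, Finset.sum_ite_eq, M.srcS P, M.dstS P, if_true]
    ring
  have h3 : ∑ P, M.lam P * Dmet S (p (M.src P)) (p (M.dst P)) ≤
      ∑ P, M.lam P * wlen (Dedge S p) (M.walk P) :=
    Finset.sum_le_sum fun P _ =>
      mul_le_mul_of_nonneg_left (Dmet_le_wlen p (M.walk P)) (M.lam_nonneg P)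
  rw [← M.sum_edge_eq_sum_path] at h3
  have h4 : ∑ e ∈ G.edgeFinset, Dedge S p e * M.flowOn e ≤
      ∑ e ∈ G.edgeFinset, (a e * M.flowOn e + c e * max 0 (Dedge S p e - a e)) := by
    refine Finset.sum_le_sum fun e he => ?_
    have hc : M.flowOn e ≤ c e := M.cap e (by simpa using he)
    have h0 : 0 ≤ M.flowOn e := Finset.sum_nonneg fun P _ => by
      split_ifs
      · exact M.lam_nonneg P
      · exact le_rfl
    have hm := le_max_right 0 (Dedge S p e - a e)
    have hm0 := le_max_left 0 (Dedge S p e - a e)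
    nlinarith [mul_le_mul_of_nonneg_left hm h0, mul_le_mul_of_nonneg_right hc hm0]
  rw [Finset.sum_add_distrib] at h4
  unfold Multiflow.cost
  linarith

end Weak

/-! ### From dual LP solutions to potentials -/

section DualPotential

variable {V : Type*} (G : SimpleGraph V) (S : Finset V)

open Classical in
/-- The potential with `s`-coordinate `max (0, y s - d(s, i))` at the node `i`, where `d` is the
shortest-walk distance for the edge weight `w`. It is written as a supremum over walks together
with `0`, so that nodes which cannot be reached from `s` get the value `0`. -/
noncomputable def dualPot (w : Sym2 V → ℝ) (y : V → ℝ) (i s : V) : ℝ :=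
  if s ∈ S then sSup (insert 0 {x | ∃ W : G.Walk s i, x = y s - wlen w W}) else 0

variable {G S} {w : Sym2 V → ℝ} {y : V → ℝ}

lemma dualPot_bdd (hw : ∀ e, 0 ≤ w e) (hy : ∀ s, 0 ≤ y s) (i s : V) :
    BddAbove (insert 0 {x | ∃ W : G.Walk s i, x = y s - wlen w W}) := by
  refine ⟨y s, ?_⟩
  rintro x (rfl | ⟨W, rfl⟩)
  · exact hy s
  · linarith [wlen_nonneg hw W]

lemma dualPot_nonneg (hw : ∀ e, 0 ≤ w e) (hy : ∀ s, 0 ≤ y s) (i s : V) :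
    0 ≤ dualPot G S w y i s := by
  unfold dualPot
  split_ifs
  · exact le_csSup (dualPot_bdd hw hy i s) (Set.mem_insert _ _)
  · exact le_rfl

lemma le_dualPot (hw : ∀ e, 0 ≤ w e) (hy : ∀ s, 0 ≤ y s) {i s : V} (hs : s ∈ S)
    (W : G.Walk s i) : y s - wlen w W ≤ dualPot G S w y i s := by
  unfold dualPot
  rw [if_pos hs]
  exact le_csSup (dualPot_bdd hw hy i s) (Set.mem_insert_of_mem _ ⟨W, rfl⟩)

lemma dualPot_le {i s : V} {B : ℝ} (hB : 0 ≤ B)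
    (h : s ∈ S → ∀ W : G.Walk s i, y s - wlen w W ≤ B) : dualPot G S w y i s ≤ B := by
  unfold dualPot
  split_ifs with hs
  · refine csSup_le (Set.insert_nonempty _ _) ?_
    rintro x (rfl | ⟨W, rfl⟩)
    · exact hB
    · exact h hs W
  · exact hB

lemma exists_walk_of_lt_dualPot {i s : V} {x : ℝ} (hx : 0 ≤ x)
    (h : x < dualPot G S w y i s) : s ∈ S ∧ ∃ W : G.Walk s i, x < y s - wlen w W := by
  by_contra hcon
  push Not at hcon
  exact absurd (dualPot_le hx hcon) (not_le.mpr h)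

lemma dualPot_lip (hw : ∀ e, 0 ≤ w e) (hy : ∀ s, 0 ≤ y s) {i j : V} (s : V)
    (U : G.Walk i j) : dualPot G S w y i s ≤ dualPot G S w y j s + wlen w U := by
  refine dualPot_le (add_nonneg (dualPot_nonneg hw hy _ _) (wlen_nonneg hw U)) fun hs W => ?_
  have := le_dualPot hw hy hs (W.append U)
  rw [wlen_append] at this
  linarith

/-- The triangle inequality `d(s, t) ≤ d(s, i) + d(i, j) + d(j, t)` together with
`y s + y t ≤ d(s, t)` bounds the star distance across two different branches. -/
lemma dualPot_pair (hyw : ∀ s ∈ S, ∀ t ∈ S, s ≠ t → ∀ W : G.Walk s t, y s + y t ≤ wlen w W)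
    {i j s t : V} (hst : s ≠ t) (U : G.Walk i j) (h1 : 0 < dualPot G S w y i s)
    (h2 : 0 < dualPot G S w y j t) :
    dualPot G S w y i s + dualPot G S w y j t ≤ wlen w U := by
  by_contra hcon
  push Not at hcon
  set P := dualPot G S w y i s
  set Q := dualPot G S w y j t
  obtain ⟨hs, W, hW⟩ := exists_walk_of_lt_dualPot (G := G) (S := S) (w := w) (y := y)
    (i := i) (s := s) (x := max 0 (P - (P + Q - wlen w U) / 2)) (le_max_left _ _)
    (max_lt h1 (by change _ < P; linarith))
  obtain ⟨ht, W', hW'⟩ := exists_walk_of_lt_dualPot (G := G) (S := S) (w := w) (y := y)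
    (i := j) (s := t) (x := max 0 (Q - (P + Q - wlen w U) / 2)) (le_max_left _ _)
    (max_lt h2 (by change _ < Q; linarith))
  have := hyw s hs t ht hst ((W.append U).append W'.reverse)
  rw [wlen_append, wlen_append, wlen_reverse] at this
  have h3 := (le_max_right _ _).trans_lt hW
  have h4 := (le_max_right _ _).trans_lt hW'
  linarith

lemma dualPot_self (hw : ∀ e, 0 ≤ w e) (hy : ∀ s, 0 ≤ y s) {s : V} (hs : s ∈ S) :
    dualPot G S w y s s = y s := by
  refine le_antisymm (dualPot_le (hy s) fun _ W => ?_) ?_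
  · linarith [wlen_nonneg hw W]
  · have := le_dualPot hw hy hs (Walk.nil : G.Walk s s)
    rwa [wlen_nil, sub_zero] at this

lemma dualPot_isPotential (hw : ∀ e, 0 ≤ w e) (hy : ∀ s, 0 ≤ y s)
    (hyw : ∀ s ∈ S, ∀ t ∈ S, s ≠ t → ∀ W : G.Walk s t, y s + y t ≤ wlen w W) :
    IsPotential S (dualPot G S w y) := by
  refine ⟨fun i => ⟨dualPot_nonneg hw hy i, fun u hu => ?_, fun u u' hu hu' => ?_⟩,
    fun s hs u hu => ?_⟩
  · by_contra h
    exact hu (if_neg h)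
  · by_contra h
    have h1 := lt_of_le_of_ne (dualPot_nonneg hw hy i u) hu.symm
    have h2 := lt_of_le_of_ne (dualPot_nonneg hw hy i u') hu'.symm
    have := dualPot_pair hyw h (Walk.nil : G.Walk i i) h1 h2
    rw [wlen_nil] at this
    linarith
  · by_contra h
    refine hu (le_antisymm (dualPot_le le_rfl fun hu W => ?_) (dualPot_nonneg hw hy s u))
    have := hyw u hu s hs h W
    linarith [hy s]

lemma dualPot_edge (hw : ∀ e, 0 ≤ w e) (hy : ∀ s, 0 ≤ y s)
    (hyw : ∀ s ∈ S, ∀ t ∈ S, s ≠ t → ∀ W : G.Walk s t, y s + y t ≤ wlen w W)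
    {e : Sym2 V} (he : e ∈ G.edgeSet) : Dedge S (dualPot G S w y) e ≤ w e := by
  classical
  induction e using Sym2.ind with
  | _ i j =>
  have hadj : G.Adj i j := he
  let U : G.Walk i j := Walk.cons hadj Walk.nil
  have hU : wlen w U = w s(i, j) := by simp [U, wlen_cons, wlen_nil]
  have hU' : wlen w U.reverse = w s(i, j) := by rw [wlen_reverse, hU]
  have : Nonempty V := ⟨i⟩
  have hP := dualPot_isPotential hw hy hyw
  obtain ⟨s, x, hx0, hxS, hx⟩ := (hP.1 i).exists_eq
  obtain ⟨t, x', hx0', hxS', hx'⟩ := (hP.1 j).exists_eq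
  have es : ∀ u, dualPot G S w y i u = if u = s then x else 0 := fun u => congrFun hx u
  have et : ∀ u, dualPot G S w y j u = if u = t then x' else 0 := fun u => congrFun hx' u
  rw [Dedge_mk, hx, hx']
  by_cases hst : s = t
  · subst hst
    rw [Dmet_single_same hxS hxS', abs_le]
    have l1 := dualPot_lip (S := S) hw hy s U
    have l2 := dualPot_lip (S := S) hw hy s U.reverse
    rw [es, et, if_pos rfl, if_pos rfl] at l1 l2
    constructor <;> linarith
  · rw [Dmet_single_ne hst hx0 hx0' hxS hxS']
    have l1 := dualPot_lip (S := S) hw hy s U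
    have l2 := dualPot_lip (S := S) hw hy t U.reverse
    rw [es, et, if_pos rfl, if_neg hst] at l1
    rw [es, et, if_pos rfl, if_neg (Ne.symm hst)] at l2
    rcases hx0.eq_or_lt with h | h
    · linarith
    rcases hx0'.eq_or_lt with h' | h'
    · linarith
    have := dualPot_pair hyw hst U (by rw [es, if_pos rfl]; exact h)
      (by rw [et, if_pos rfl]; exact h')
    rw [es, et, if_pos rfl, if_pos rfl, hU] at this
    exact this

end DualPotential

/-! ### Half-integral rounding -/

section Rounding

/-- Rounding to half-integers with a threshold `α`. For every `α` it is monotone, odd, and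
commutes with integer translations; averaged over `α ∈ [0, 1]` it is the identity. -/
noncomputable def rnd (α x : ℝ) : ℝ := ((⌊x + α⌋ : ℝ) + ⌈x - α⌉) / 2

lemma rnd_mono (α : ℝ) : Monotone (rnd α) := by
  intro x y h
  have h1 : (⌊x + α⌋ : ℝ) ≤ ⌊y + α⌋ := by exact_mod_cast Int.floor_le_floor (by linarith)
  have h2 : (⌈x - α⌉ : ℝ) ≤ ⌈y - α⌉ := by exact_mod_cast Int.ceil_le_ceil (by linarith)
  unfold rnd
  linarith

lemma rnd_neg (α x : ℝ) : rnd α (-x) = - rnd α x := by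
  unfold rnd
  have h1 : -x + α = -(x - α) := by ring
  have h2 : -x - α = -(x + α) := by ring
  rw [h1, h2, Int.floor_neg, Int.ceil_neg]
  push_cast
  ring

lemma rnd_zero (α : ℝ) : rnd α 0 = 0 := by
  have := rnd_neg α 0
  rw [neg_zero] at this
  linarith

lemma rnd_add_nat (α x : ℝ) (n : ℕ) : rnd α (x + n) = rnd α x + n := by
  unfold rnd
  have h1 : x + n + α = x + α + n := by ring
  have h2 : x + n - α = x - α + n := by ring
  rw [h1, h2, Int.floor_add_natCast, Int.ceil_add_natCast]
  push_cast
  ring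

lemma rnd_nonneg (α : ℝ) {x : ℝ} (hx : 0 ≤ x) : 0 ≤ rnd α x := by
  rw [← rnd_zero α]; exact rnd_mono α hx

/-- `F` is integrable on `[0, 1]` with mean value `v`. -/
def MeanIs (F : ℝ → ℝ) (v : ℝ) : Prop :=
  IntervalIntegrable F MeasureTheory.volume 0 1 ∧ ∫ α in (0 : ℝ)..1, F α = v

lemma MeanIs.const (v : ℝ) : MeanIs (fun _ => v) v := by
  refine ⟨by simp, by simp⟩

lemma MeanIs.add {F F' : ℝ → ℝ} {v v' : ℝ} (h : MeanIs F v) (h' : MeanIs F' v') :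
    MeanIs (fun α => F α + F' α) (v + v') :=
  ⟨h.1.add h'.1, by rw [intervalIntegral.integral_add h.1 h'.1, h.2, h'.2]⟩

lemma MeanIs.sub {F F' : ℝ → ℝ} {v v' : ℝ} (h : MeanIs F v) (h' : MeanIs F' v') :
    MeanIs (fun α => F α - F' α) (v - v') :=
  ⟨h.1.sub h'.1, by rw [intervalIntegral.integral_sub h.1 h'.1, h.2, h'.2]⟩

lemma MeanIs.mul {F : ℝ → ℝ} {v : ℝ} (k : ℝ) (h : MeanIs F v) :
    MeanIs (fun α => k * F α) (k * v) :=
  ⟨h.1.const_mul k, by rw [intervalIntegral.integral_const_mul, h.2]⟩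

lemma MeanIs.sum {ι : Type*} (s : Finset ι) {F : ι → ℝ → ℝ} {v : ι → ℝ}
    (h : ∀ i ∈ s, MeanIs (F i) (v i)) : MeanIs (fun α => ∑ i ∈ s, F i α) (∑ i ∈ s, v i) := by
  classical
  induction s using Finset.induction_on with
  | empty => simpa using MeanIs.const 0
  | insert a s ha ih =>
    simp only [Finset.sum_insert ha]
    exact (h a (by simp)).add (ih fun i hi => h i (by simp [hi]))

lemma MeanIs.exists_le {F : ℝ → ℝ} {v : ℝ} (h : MeanIs F v) : ∃ α, v ≤ F α := by
  have : MeasureTheory.IsProbabilityMeasure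
      (MeasureTheory.volume.restrict (Set.Ioc (0 : ℝ) 1)) := ⟨by simp⟩
  obtain ⟨α, hα⟩ := MeasureTheory.exists_integral_le
    (μ := MeasureTheory.volume.restrict (Set.Ioc (0 : ℝ) 1)) (f := F)
    ((intervalIntegrable_iff_integrableOn_Ioc_of_le zero_le_one).1 h.1)
  refine ⟨α, ?_⟩
  rw [← intervalIntegral.integral_of_le zero_le_one, h.2] at hα
  exact hα

lemma integral_fract_unit : ∫ t in (0 : ℝ)..1, Int.fract t = 1 / 2 := by
  have : ∫ t in (0 : ℝ)..1, Int.fract t = ∫ t in (0 : ℝ)..1, t := by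
    rw [intervalIntegral.integral_of_le zero_le_one, intervalIntegral.integral_of_le zero_le_one,
      ← MeasureTheory.integral_Ico_eq_integral_Ioc, ← MeasureTheory.integral_Ico_eq_integral_Ioc]
    refine MeasureTheory.setIntegral_congr_fun measurableSet_Ico fun t ht => ?_
    exact Int.fract_eq_self.2 ⟨ht.1, ht.2⟩
  rw [this]
  simp

lemma mean_floor (x : ℝ) : MeanIs (fun α => (⌊x + α⌋ : ℝ)) x := by
  have hmono : Monotone (fun t : ℝ => (⌊t⌋ : ℝ)) := fun a b h =>
    Int.cast_mono (Int.floor_le_floor h)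
  have hint : ∀ a b : ℝ, IntervalIntegrable (fun t : ℝ => (⌊t⌋ : ℝ)) MeasureTheory.volume a b :=
    fun a b => hmono.intervalIntegrable
  refine ⟨Monotone.intervalIntegrable fun a b h => hmono (by linarith), ?_⟩
  have h1 : ∫ α in (0 : ℝ)..1, (⌊x + α⌋ : ℝ) = ∫ t in x..(x + 1), (⌊t⌋ : ℝ) := by
    rw [intervalIntegral.integral_comp_add_left (fun t : ℝ => (⌊t⌋ : ℝ)) x, add_zero]
  have h2 : ∫ t in x..(x + 1), Int.fract t = 1 / 2 := by
    have hper : Function.Periodic (Int.fract : ℝ → ℝ) 1 := fun t => Int.fract_add_one t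
    have := hper.intervalIntegral_add_eq x 0
    rw [this, zero_add, integral_fract_unit]
  have h3 : ∫ t in x..(x + 1), (t - (⌊t⌋ : ℝ)) = 1 / 2 := h2
  rw [intervalIntegral.integral_sub (by simp) (hint _ _), integral_id] at h3
  rw [h1]
  linarith

lemma mean_rnd (x : ℝ) : MeanIs (fun α => rnd α x) x := by
  have h1 := mean_floor x
  have h2 := (mean_floor (-x)).mul (-1)
  have h3 := (h1.add h2).mul (1 / 2)
  convert h3 using 1
  · ext α
    unfold rnd
    have : -x + α = -(x - α) := by ring
    rw [this, Int.floor_neg]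
    push_cast
    ring
  · ring

/-- Rounding preserves whether `x - x' ≥ a`, so the positive part acts linearly here: it is
either the identity for all thresholds or zero for all of them. -/
lemma mean_pos_sub (x x' : ℝ) (a : ℕ) :
    MeanIs (fun α => max 0 (rnd α x - rnd α x' - a)) (max 0 (x - x' - a)) := by
  rcases le_total (x' + a) x with h | h
  · have : ∀ α, max 0 (rnd α x - rnd α x' - a) = rnd α x - rnd α x' - a := by
      intro α
      have := rnd_mono α h
      rw [rnd_add_nat] at this
      exact max_eq_right (by linarith)
    simp only [this]
    rw [max_eq_right (by linarith)]
    exact ((mean_rnd x).sub (mean_rnd x')).sub (MeanIs.const _)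
  · have : ∀ α, max 0 (rnd α x - rnd α x' - a) = 0 := by
      intro α
      have := rnd_mono α h
      rw [rnd_add_nat] at this
      exact max_eq_left (by linarith)
    simp only [this]
    rw [max_eq_left (by linarith)]
    exact MeanIs.const _

lemma mean_abs (x x' : ℝ) (a : ℕ) :
    MeanIs (fun α => max 0 (|rnd α x - rnd α x'| - a)) (max 0 (|x - x'| - a)) := by
  rcases le_total x' x with h | h
  · have : ∀ α, |rnd α x - rnd α x'| = rnd α x - rnd α x' := fun α =>
      abs_of_nonneg (by linarith [rnd_mono α h])
    simp only [this]
    rw [abs_of_nonneg (by linarith)]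
    exact mean_pos_sub x x' a
  · have : ∀ α, |rnd α x - rnd α x'| = rnd α x' - rnd α x := fun α => by
      rw [abs_of_nonpos (by linarith [rnd_mono α h]), neg_sub]
    simp only [this]
    rw [abs_of_nonpos (by linarith), neg_sub]
    exact mean_pos_sub x' x a

lemma mean_add (x x' : ℝ) (a : ℕ) :
    MeanIs (fun α => max 0 (rnd α x + rnd α x' - a)) (max 0 (x + x' - a)) := by
  have := mean_pos_sub x (-x') a
  simpa only [rnd_neg, sub_neg_eq_add] using this

variable {V : Type*} {S : Finset V}

lemma rnd_potential (α : ℝ) {p : V → V → ℝ} (hp : IsPotential S p) :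
    IsPotential S (fun i u => rnd α (p i u)) := by
  have h0 : ∀ i u, rnd α (p i u) ≠ 0 → p i u ≠ 0 := fun i u h h' => h (by rw [h', rnd_zero])
  exact ⟨fun i => ⟨fun u => rnd_nonneg α ((hp.1 i).1 u),
    fun u hu => (hp.1 i).2.1 u (h0 i u hu),
    fun u u' hu hu' => (hp.1 i).2.2 u u' (h0 i u hu) (h0 i u' hu')⟩,
    fun s hs u hu => hp.2 s hs u (h0 s u hu)⟩

lemma rnd_halfIntegral (α : ℝ) (p : V → V → ℝ) :
    HalfIntegral (fun i u => rnd α (p i u)) :=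
  fun i u => ⟨⌊p i u + α⌋ + ⌈p i u - α⌉, by simp [rnd]⟩

lemma mean_Dmet {q q' : V → ℝ} (hq : TPoint S q) (hq' : TPoint S q') (a : ℕ) :
    MeanIs (fun α => max 0 (Dmet S (fun u => rnd α (q u)) (fun u => rnd α (q' u)) - a))
      (max 0 (Dmet S q q' - a)) := by
  classical
  rcases isEmpty_or_nonempty V with hV | hV
  · have : S = ∅ := Finset.eq_empty_of_isEmpty S
    simpa [this, Dmet] using MeanIs.const (max 0 (-(a : ℝ)))
  obtain ⟨s, x, hx0, hxS, rfl⟩ := hq.exists_eq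
  obtain ⟨t, x', hx0', hxS', rfl⟩ := hq'.exists_eq
  have e : ∀ α s x, (fun u => rnd α (if u = s then x else 0)) =
      fun u : V => if u = s then rnd α x else 0 := by
    intro α s x
    ext u
    split_ifs
    · rfl
    · exact rnd_zero α
  have hn : ∀ {α x : ℝ}, rnd α x ≠ 0 → x ≠ 0 := fun h h' => h (by rw [h', rnd_zero])
  simp only [e]
  by_cases hst : s = t
  · subst hst
    rw [Dmet_single_same hxS hxS']
    have : ∀ α, Dmet S (fun u => if u = s then rnd α x else 0)
        (fun u => if u = s then rnd α x' else 0) = |rnd α x - rnd α x'| := fun α =>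
      Dmet_single_same (fun h => hxS (hn h)) (fun h => hxS' (hn h))
    simp only [this]
    exact mean_abs x x' a
  · rw [Dmet_single_ne hst hx0 hx0' hxS hxS']
    have : ∀ α, Dmet S (fun u => if u = s then rnd α x else 0)
        (fun u => if u = t then rnd α x' else 0) = rnd α x + rnd α x' := fun α =>
      Dmet_single_ne hst (rnd_nonneg α hx0) (rnd_nonneg α hx0')
        (fun h => hxS (hn h)) (fun h => hxS' (hn h))
    simp only [this]
    exact mean_add x x' a

variable [Fintype V] [DecidableEq V] (G : SimpleGraph V) [DecidableRel G.Adj]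

/-- A potential is the mean of its roundings, and so is its dual value. -/
lemma mean_Dval (c : Sym2 V → ℝ) (a : Sym2 V → ℕ) (r : V → ℝ) {p : V → V → ℝ}
    (hp : IsPotential S p) :
    MeanIs (fun α => Dval G S c (fun e => (a e : ℝ)) r (fun i u => rnd α (p i u)))
      (Dval G S c (fun e => (a e : ℝ)) r p) := by
  simp only [fun α => Dval_eq G c (fun e => (a e : ℝ)) r (rnd_potential α hp), Dval_eq G c _ r hp]
  refine (MeanIs.sum _ fun s _ => (mean_rnd _).mul _).sub (MeanIs.sum _ fun e _ => MeanIs.mul _ ?_)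
  induction e using Sym2.ind with
  | _ i j => exact mean_Dmet (hp.1 i) (hp.1 j) (a s(i, j))

end Rounding

/-! ### Proper potentials -/

section Proper

variable {V : Type*} {S : Finset V}

lemma proper_of_le {p : V → V → ℝ} (hp : IsPotential S p) (h : ∀ i, ∀ s ∈ S, p i s ≤ p s s) :
    ProperPotential S p := by
  intro i s hs hi
  rw [Dmet_zero_terminal hp hs]
  unfold Dmet
  rw [Finset.sum_eq_single s]
  · simpa [abs_of_nonneg ((hp.1 i).1 s)] using h i s hs
  · intro u _ hu
    have : p i u = 0 := by by_contra h; exact hu (hi u h)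
    simp [this]
  · intro h; exact (h hs).elim

lemma trunc_potential {p : V → V → ℝ} (hp : IsPotential S p) :
    IsPotential S (fun i u => min (p i u) (p u u)) := by
  have h0 : ∀ i u, min (p i u) (p u u) ≠ 0 → p i u ≠ 0 := fun i u h h' =>
    h (by rw [h']; exact min_eq_left ((hp.1 u).1 u))
  exact ⟨fun i => ⟨fun u => le_min ((hp.1 i).1 u) ((hp.1 u).1 u),
    fun u hu => (hp.1 i).2.1 u (h0 i u hu),
    fun u u' hu hu' => (hp.1 i).2.2 u u' (h0 i u hu) (h0 i u' hu')⟩,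
    fun s hs u hu => hp.2 s hs u (h0 s u hu)⟩

variable [Fintype V] [DecidableEq V] (G : SimpleGraph V) [DecidableRel G.Adj]

/-- Truncating every branch of the star at its terminal is nonexpansive. -/
lemma Dval_le_trunc {c : Sym2 V → ℝ} (hc : ∀ e, 0 ≤ c e) (a : Sym2 V → ℝ) (r : V → ℝ)
    {p : V → V → ℝ} (hp : IsPotential S p) :
    Dval G S c a r p ≤ Dval G S c a r (fun i u => min (p i u) (p u u)) := by
  rw [Dval_eq G c a r hp, Dval_eq G c a r (trunc_potential hp)]
  simp only [min_self]
  refine sub_le_sub_left (Finset.sum_le_sum fun e _ => mul_le_mul_of_nonneg_left ?_ (hc e)) _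
  refine max_le_max le_rfl (sub_le_sub_right ?_ _)
  induction e using Sym2.ind with
  | _ i j =>
    rw [Dedge_mk, Dedge_mk]
    refine Finset.sum_le_sum fun u _ => ?_
    simpa using abs_min_sub_min_le_max (p i u) (p u u) (p j u) (p u u)

/-- Every potential is dominated by a proper half-integral one. -/
lemma exists_proper_half {c : Sym2 V → ℝ} (hc : ∀ e, 0 ≤ c e) (a : Sym2 V → ℕ) (r : V → ℝ)
    {p : V → V → ℝ} (hp : IsPotential S p) :
    ∃ p', IsPotential S p' ∧ HalfIntegral p' ∧ ProperPotential S p' ∧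
      Dval G S c (fun e => (a e : ℝ)) r p ≤ Dval G S c (fun e => (a e : ℝ)) r p' := by
  have ht := trunc_potential hp
  obtain ⟨α, hα⟩ := (mean_Dval G c a r ht).exists_le
  refine ⟨_, rnd_potential α ht, rnd_halfIntegral α _, proper_of_le (rnd_potential α ht) ?_,
    (Dval_le_trunc G hc _ r hp).trans hα⟩
  intro i s _
  exact rnd_mono α (by simp)

end Proper

/-! ### The cut condition bounds the dual -/

section Cut

variable {V : Type*} {S : Finset V}

/-- The function `ij ↦ |f i - f j|` on edges. -/
def absDiff (f : V → ℝ) (e : Sym2 V) : ℝ :=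
  Sym2.lift ⟨fun i j => |f i - f j|, fun _ _ => abs_sub_comm _ _⟩ e

lemma absDiff_mk (f : V → ℝ) (i j : V) : absDiff f s(i, j) = |f i - f j| := rfl

lemma Dedge_eq_sum (p : V → V → ℝ) (e : Sym2 V) :
    Dedge S p e = ∑ u ∈ S, absDiff (fun i => p i u) e := by
  induction e using Sym2.ind with
  | _ i j => rfl

variable [Fintype V] [DecidableEq V] (G : SimpleGraph V) [DecidableRel G.Adj]

/-- Peeling the level sets `{g ≥ 1}, {g ≥ 2}, …` of `g`, each of which is an `s`-cut. -/
lemma cut_bound {c : Sym2 V → ℝ} (hc : ∀ e, 0 ≤ c e) {ρ : ℝ} {s : V}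
    (hcut : ∀ X : Finset V, s ∈ X → (∀ t ∈ S, t ∈ X → t = s) → ρ ≤ cutCap G c X) (n : ℕ) :
    ∀ g : V → ℕ, (∀ t ∈ S, t ≠ s → g t = 0) → g s = n →
      ρ * n ≤ ∑ e ∈ G.edgeFinset, c e * absDiff (fun i => (g i : ℝ)) e := by
  induction n with
  | zero =>
    intro g _ _
    simp only [Nat.cast_zero, mul_zero]
    refine Finset.sum_nonneg fun e _ => mul_nonneg (hc e) ?_
    induction e using Sym2.ind with
    | _ i j => exact abs_nonneg _
  | succ n ih =>
    intro g hg hgs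
    have h1 := ih (fun i => g i - 1) (fun t ht hts => by simp [hg t ht hts]) (by simp [hgs])
    have h2 := hcut ((univ : Finset V).filter fun i => 0 < g i) (by simp [hgs]) (by
      intro t ht htX
      by_contra hts
      simp [hg t ht hts] at htX)
    have h3 : ∑ e ∈ G.edgeFinset, c e * absDiff (fun i => ((g i - 1 : ℕ) : ℝ)) e +
        cutCap G c ((univ : Finset V).filter fun i => 0 < g i) ≤
        ∑ e ∈ G.edgeFinset, c e * absDiff (fun i => (g i : ℝ)) e := by
      unfold cutCap
      rw [← Finset.sum_add_distrib]
      refine Finset.sum_le_sum fun e _ => ?_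
      induction e using Sym2.ind with
      | _ i j =>
        have hce := hc s(i, j)
        simp only [absDiff_mk, Sym2.lift_mk, Finset.mem_filter, Finset.mem_univ, true_and]
        rcases Nat.eq_zero_or_pos (g i) with hi | hi <;>
          rcases Nat.eq_zero_or_pos (g j) with hj | hj
        · simp [hi, hj]
        · have : ((g j - 1 : ℕ) : ℝ) = g j - 1 := by push_cast [Nat.cast_sub hj]; ring
          have h1 : (1 : ℝ) ≤ g j := by exact_mod_cast hj
          simp only [hi, hj, this, lt_irrefl]
          simp only [Nat.zero_sub, Nat.cast_zero, zero_sub, abs_neg]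
          rw [abs_of_nonneg (by linarith : (0 : ℝ) ≤ g j - 1),
            abs_of_nonneg (by linarith : (0 : ℝ) ≤ g j)]
          simp
          linarith
        · have : ((g i - 1 : ℕ) : ℝ) = g i - 1 := by push_cast [Nat.cast_sub hi]; ring
          have h1 : (1 : ℝ) ≤ g i := by exact_mod_cast hi
          simp only [hi, hj, this, lt_irrefl]
          simp only [Nat.zero_sub, Nat.cast_zero, sub_zero]
          rw [abs_of_nonneg (by linarith : (0 : ℝ) ≤ g i - 1),
            abs_of_nonneg (by linarith : (0 : ℝ) ≤ g i)]
          simp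
          linarith
        · have e1 : ((g i - 1 : ℕ) : ℝ) = g i - 1 := by push_cast [Nat.cast_sub hi]; ring
          have e2 : ((g j - 1 : ℕ) : ℝ) = g j - 1 := by push_cast [Nat.cast_sub hj]; ring
          simp [hi, hj, e1, e2]
    push_cast
    linarith

lemma Dval_bound_half {c : Sym2 V → ℝ} (hc : ∀ e, 0 ≤ c e) {r : V → ℝ}
    (hcut : ∀ s ∈ S, ∀ X : Finset V, s ∈ X → (∀ t ∈ S, t ∈ X → t = s) → r s ≤ cutCap G c X)
    (a : Sym2 V → ℝ) {p : V → V → ℝ} (hp : IsPotential S p) (hh : HalfIntegral p) :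
    Dval G S c a r p ≤ ∑ e ∈ G.edgeFinset, c e * a e := by
  rw [Dval_eq G c a r hp]
  choose z hz using hh
  have hz0 : ∀ i u, 0 ≤ z i u := fun i u => by
    have := (hp.1 i).1 u
    rw [hz] at this
    have : (0 : ℝ) ≤ z i u := by linarith
    exact_mod_cast this
  have hN : ∀ i u, p i u = ((z i u).toNat : ℝ) / 2 := fun i u => by
    rw [hz]
    congr 1
    exact_mod_cast (Int.toNat_of_nonneg (hz0 i u)).symm
  have h1 : ∀ s ∈ S, r s * p s s ≤ ∑ e ∈ G.edgeFinset, c e * absDiff (fun i => p i s) e := by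
    intro s hs
    have := cut_bound G hc (hcut s hs) _ (fun i => (z i s).toNat) (by
      intro t ht hts
      have h0 : p t s = 0 := by by_contra h; exact hts (hp.2 t ht s h).symm
      have := hN t s
      rw [h0] at this
      have : ((z t s).toNat : ℝ) = 0 := by linarith
      exact_mod_cast this) rfl
    have e1 : ∀ e, absDiff (fun i => p i s) e =
        absDiff (fun i => ((z i s).toNat : ℝ)) e / 2 := by
      intro e
      induction e using Sym2.ind with
      | _ i j =>
        rw [absDiff_mk, absDiff_mk, hN, hN, ← sub_div, abs_div, abs_two]
    simp only [e1, ← mul_div_assoc, ← Finset.sum_div]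
    rw [hN, ← mul_div_assoc]
    linarith
  have h2 := Finset.sum_le_sum h1
  rw [Finset.sum_comm] at h2
  simp only [← Finset.mul_sum, ← Dedge_eq_sum] at h2
  have h3 : ∑ e ∈ G.edgeFinset, c e * Dedge S p e ≤ ∑ e ∈ G.edgeFinset,
      (c e * max 0 (Dedge S p e - a e) + c e * a e) := by
    refine Finset.sum_le_sum fun e _ => ?_
    rw [← mul_add]
    refine mul_le_mul_of_nonneg_left ?_ (hc e)
    linarith [le_max_right 0 (Dedge S p e - a e)]
  rw [Finset.sum_add_distrib] at h3
  linarith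

/-- The cut condition `c(δX) ≥ r(s)` makes the dual objective bounded. -/
lemma Dval_bound {c : Sym2 V → ℝ} (hc : ∀ e, 0 ≤ c e) {r : V → ℝ}
    (hcut : ∀ s ∈ S, ∀ X : Finset V, s ∈ X → (∀ t ∈ S, t ∈ X → t = s) → r s ≤ cutCap G c X)
    (a : Sym2 V → ℕ) {p : V → V → ℝ} (hp : IsPotential S p) :
    Dval G S c (fun e => (a e : ℝ)) r p ≤ ∑ e ∈ G.edgeFinset, c e * a e := by
  obtain ⟨p', hp', hh, -, hle⟩ := exists_proper_half G hc a r hp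
  exact hle.trans (Dval_bound_half G hc hcut _ hp' hh)

end Cut

/-! ### Attainment of the dual maximum -/

section Attain

/-- The half-integers. -/
def IsHalf (x : ℝ) : Prop := ∃ z : ℤ, x = (z : ℝ) / 2

lemma IsHalf.add {x y : ℝ} (hx : IsHalf x) (hy : IsHalf y) : IsHalf (x + y) := by
  obtain ⟨z, rfl⟩ := hx
  obtain ⟨z', rfl⟩ := hy
  exact ⟨z + z', by push_cast; ring⟩

lemma IsHalf.sub {x y : ℝ} (hx : IsHalf x) (hy : IsHalf y) : IsHalf (x - y) := by
  obtain ⟨z, rfl⟩ := hx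
  obtain ⟨z', rfl⟩ := hy
  exact ⟨z - z', by push_cast; ring⟩

lemma IsHalf.nat_mul (n : ℕ) {x : ℝ} (hx : IsHalf x) : IsHalf (n * x) := by
  obtain ⟨z, rfl⟩ := hx
  exact ⟨n * z, by push_cast; ring⟩

lemma IsHalf.natCast (n : ℕ) : IsHalf n := ⟨2 * n, by push_cast; ring⟩

lemma IsHalf.zero : IsHalf 0 := ⟨0, by simp⟩

lemma IsHalf.abs {x : ℝ} (hx : IsHalf x) : IsHalf |x| := by
  rcases abs_choice x with h | h
  · rwa [h]
  · rw [h, ← zero_sub]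
    exact IsHalf.zero.sub hx

lemma IsHalf.max_zero {x : ℝ} (hx : IsHalf x) : IsHalf (max 0 x) := by
  rcases max_choice 0 x with h | h
  · rw [h]
    exact IsHalf.zero
  · rwa [h]

lemma IsHalf.sum {ι : Type*} (s : Finset ι) {f : ι → ℝ} (h : ∀ i ∈ s, IsHalf (f i)) :
    IsHalf (∑ i ∈ s, f i) :=
  Finset.sum_induction f IsHalf (fun _ _ => IsHalf.add) IsHalf.zero h

variable {V : Type*} [Fintype V] [DecidableEq V] (G : SimpleGraph V) [DecidableRel G.Adj]
  {S : Finset V}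

lemma Dval_isHalf (c a : Sym2 V → ℕ) (r : V → ℕ) {p : V → V → ℝ} (hp : IsPotential S p)
    (hh : HalfIntegral p) :
    IsHalf (Dval G S (fun e => (c e : ℝ)) (fun e => (a e : ℝ)) (fun s => (r s : ℝ)) p) := by
  rw [Dval_eq G _ _ _ hp]
  refine (IsHalf.sum _ fun s _ => IsHalf.nat_mul _ (hh s s)).sub
    (IsHalf.sum _ fun e _ => IsHalf.nat_mul _ (IsHalf.max_zero (IsHalf.sub ?_ (IsHalf.natCast _))))
  rw [Dedge_eq_sum]
  refine IsHalf.sum _ fun u _ => ?_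
  induction e using Sym2.ind with
  | _ i j => exact (IsHalf.sub (hh i u) (hh j u)).abs

/-- The dual values of half-integral potentials form a discrete set bounded above, so a
maximum is attained among the proper half-integral potentials. -/
lemma exists_dual_max (c a : Sym2 V → ℕ) (r : V → ℕ)
    (hcut : ∀ s ∈ S, ∀ X : Finset V, s ∈ X → (∀ t ∈ S, t ∈ X → t = s) →
      (r s : ℝ) ≤ cutCap G (fun e => (c e : ℝ)) X) :
    ∃ p, IsPotential S p ∧ HalfIntegral p ∧ ProperPotential S p ∧ ∀ q, IsPotential S q →
      Dval G S (fun e => (c e : ℝ)) (fun e => (a e : ℝ)) (fun s => (r s : ℝ)) q ≤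
      Dval G S (fun e => (c e : ℝ)) (fun e => (a e : ℝ)) (fun s => (r s : ℝ)) p := by
  have hc : ∀ e, (0 : ℝ) ≤ (c e : ℝ) := fun e => Nat.cast_nonneg _
  set D : (V → V → ℝ) → ℝ :=
    Dval G S (fun e => (c e : ℝ)) (fun e => (a e : ℝ)) (fun s => (r s : ℝ)) with hD
  have key : ∀ q, IsPotential S q → ∃ p, IsPotential S p ∧ HalfIntegral p ∧
      ProperPotential S p ∧ D q ≤ D p := fun q hq => exists_proper_half G hc a _ hq
  have h0 : IsPotential S (fun _ _ : V => (0 : ℝ)) :=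
    ⟨fun i => ⟨fun u => le_rfl, fun u hu => (hu rfl).elim, fun u u' hu => (hu rfl).elim⟩,
      fun s hs u hu => (hu rfl).elim⟩
  obtain ⟨p0, hp0, hh0, hpr0, -⟩ := key _ h0
  obtain ⟨z0, hz0⟩ := Dval_isHalf G c a r hp0 hh0
  obtain ⟨N, hN⟩ := exists_nat_ge (2 * ∑ e ∈ G.edgeFinset, (c e : ℝ) * a e)
  obtain ⟨z, ⟨p, hp, hh, hpr, hpz⟩, hmax⟩ := Int.exists_greatest_of_bdd
    (P := fun z => ∃ p, IsPotential S p ∧ HalfIntegral p ∧ ProperPotential S p ∧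
      D p = (z : ℝ) / 2)
    ⟨N, by
      rintro z ⟨p, hp, hh, -, hpz⟩
      have := Dval_bound G hc hcut a hp
      rw [← hD, hpz] at this
      have : (z : ℝ) ≤ N := by linarith
      exact_mod_cast this⟩
    ⟨z0, p0, hp0, hh0, hpr0, hz0⟩
  refine ⟨p, hp, hh, hpr, fun q hq => ?_⟩
  obtain ⟨p', hp', hh', hpr', hle⟩ := key q hq
  obtain ⟨z', hz'⟩ := Dval_isHalf G c a r hp' hh'
  have : (z' : ℝ) ≤ z := by exact_mod_cast hmax z' ⟨p', hp', hh', hpr', hz'⟩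
  rw [hpz]
  refine hle.trans ?_
  rw [hD, hz']
  linarith

end Attain

/-! ### Strong duality -/

section Strong

variable {V : Type*} [Fintype V] [DecidableEq V] (G : SimpleGraph V) [DecidableRel G.Adj]
  {S : Finset V}

/-- A feasible solution `(y, l)` of the dual linear program yields a potential of at least
the same value. -/
lemma exists_potential_ge {c : Sym2 V → ℝ} (hc : ∀ e, 0 ≤ c e) (a : Sym2 V → ℕ) (r : V → ℝ)
    {l : Sym2 V → ℝ} {y : V → ℝ} (hl : ∀ e, 0 ≤ l e) (hy : ∀ s, 0 ≤ y s)
    (h : ∀ s ∈ S, ∀ t ∈ S, s ≠ t → ∀ W : G.Walk s t, W.IsPath →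
      y s + y t ≤ wlen (fun e => l e + a e) W) :
    ∃ p, IsPotential S p ∧ ∑ s ∈ S, r s * y s - ∑ e ∈ G.edgeFinset, c e * l e ≤
      Dval G S c (fun e => (a e : ℝ)) r p := by
  have hw : ∀ e, 0 ≤ l e + (a e : ℝ) := fun e => add_nonneg (hl e) (Nat.cast_nonneg _)
  have hyw : ∀ s ∈ S, ∀ t ∈ S, s ≠ t → ∀ W : G.Walk s t,
      y s + y t ≤ wlen (fun e => l e + a e) W := fun s hs t ht hst W =>
    (h s hs t ht hst W.bypass W.bypass_isPath).trans (wlen_bypass_le hw W)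
  have hp := dualPot_isPotential hw hy hyw
  refine ⟨_, hp, ?_⟩
  rw [Dval_eq G _ _ _ hp]
  refine sub_le_sub (le_of_eq (Finset.sum_congr rfl fun s hs => ?_))
    (Finset.sum_le_sum fun e he => mul_le_mul_of_nonneg_left ?_ (hc e))
  · rw [dualPot_self hw hy hs]
  · have := dualPot_edge hw hy hyw (e := e) (by simpa using he)
    exact max_le (hl e) (by linarith)

/-- The index type of all `S`-paths (in both orientations). -/
abbrev SPath (S : Finset V) : Type _ :=
  Σ st : {st : V × V // st.1 ∈ S ∧ st.2 ∈ S ∧ st.1 ≠ st.2}, G.Path st.1.1 st.1.2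

/-- If no potential has value above `γ`, then some feasible multiflow has cost at most `γ`. -/
lemma exists_multiflow (c a : Sym2 V → ℕ) (r : V → ℕ)
    (hcut : ∀ s ∈ S, ∀ X : Finset V, s ∈ X → (∀ t ∈ S, t ∈ X → t = s) →
      (r s : ℝ) ≤ cutCap G (fun e => (c e : ℝ)) X) (γ : ℝ)
    (hγ : ∀ q, IsPotential S q →
      Dval G S (fun e => (c e : ℝ)) (fun e => (a e : ℝ)) (fun s => (r s : ℝ)) q ≤ γ) :
    ∃ M : Multiflow G S fun e => (c e : ℝ), M.Feasible (fun s => (r s : ℝ)) ∧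
      M.cost (fun e => (a e : ℝ)) ≤ γ := by
  classical
  have hc : ∀ e, (0 : ℝ) ≤ (c e : ℝ) := fun e => Nat.cast_nonneg _
  obtain ⟨x, hx0, hx⟩ := farkas_nonneg (ι := SPath G S) (κ := Sym2 V ⊕ V ⊕ Unit)
    (fun k P => match k with
      | .inl e => if e ∈ P.2.1.edges then 1 else 0
      | .inr (.inl s) => if P.1.1.1 = s ∨ P.1.1.2 = s then -1 else 0
      | .inr (.inr _) => wlen (fun e => (a e : ℝ)) P.2.1)
    (fun k => match k with
      | .inl e => (c e : ℝ)
      | .inr (.inl s) => if s ∈ S then -(r s : ℝ) else 0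
      | .inr (.inr _) => γ) (by
    intro w hw hwA
    simp only [Fintype.sum_sum_type, Fintype.sum_unique] at hwA ⊢
    set l : Sym2 V → ℝ := fun e => w (.inl e) with hl
    set y : V → ℝ := fun s => w (.inr (.inl s)) with hy
    set z : ℝ := w (.inr (.inr default)) with hz
    have hl0 : ∀ e, 0 ≤ l e := fun e => hw _
    have hy0 : ∀ s, 0 ≤ y s := fun s => hw _
    have hz0 : 0 ≤ z := hw _
    -- the dual constraint attached to a single path
    have hP : ∀ s ∈ S, ∀ t ∈ S, s ≠ t → ∀ W : G.Walk s t, W.IsPath →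
        y s + y t ≤ wlen l W + z * wlen (fun e => (a e : ℝ)) W := by
      intro s hs t ht hst W hW
      have := hwA ⟨⟨(s, t), hs, ht, hst⟩, ⟨W, hW⟩⟩
      have e1 : ∑ e, l e * (if e ∈ W.edges then (1 : ℝ) else 0) = wlen l W := by
        rw [wlen_path l hW]
        simp only [mul_ite, mul_one, mul_zero]
        symm
        refine Finset.sum_subset (Finset.subset_univ _) fun e _ he => if_neg fun h => he ?_
        simpa using Walk.edges_subset_edgeSet W h
      have e2 : ∑ u, y u * (if s = u ∨ t = u then (-1 : ℝ) else 0) = -(y s + y t) := by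
        have : ∀ u, y u * (if s = u ∨ t = u then (-1 : ℝ) else 0) =
            (if s = u then - y u else 0) + (if t = u then - y u else 0) := by
          intro u
          by_cases h1 : s = u
          · have h2 : t ≠ u := fun h2 => hst (h1.trans h2.symm)
            simp [h1, h2]
          · simp [h1]
        simp only [this, Finset.sum_add_distrib, Finset.sum_ite_eq, Finset.mem_univ, if_true]
        ring
      change 0 ≤ ∑ e, l e * (if e ∈ W.edges then (1 : ℝ) else 0) +
        (∑ u, y u * (if s = u ∨ t = u then (-1 : ℝ) else 0) +
          z * wlen (fun e => (a e : ℝ)) W) at this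
      rw [e1, e2] at this
      linarith
    have hsum : ∑ e ∈ G.edgeFinset, (c e : ℝ) * l e ≤ ∑ e, l e * (c e : ℝ) :=
      (Finset.sum_congr rfl fun e _ => mul_comm _ _).trans_le
        (Finset.sum_le_univ_sum_of_nonneg fun e => mul_nonneg (hl0 e) (hc e))
    have hr : ∑ s, y s * (if s ∈ S then -(r s : ℝ) else 0) = - ∑ s ∈ S, (r s : ℝ) * y s := by
      simp only [mul_ite, mul_zero, Finset.sum_ite_mem, Finset.univ_inter,
        ← Finset.sum_neg_distrib]
      exact Finset.sum_congr rfl fun s _ => by ring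
    change 0 ≤ ∑ e, l e * (c e : ℝ) +
      (∑ s, y s * (if s ∈ S then -(r s : ℝ) else 0) + z * γ)
    rw [hr]
    rcases hz0.eq_or_lt with h0 | h0
    · -- a certificate without cost component would be a potential violating the cut condition
      obtain ⟨p, hp, hle⟩ := exists_potential_ge G hc (0 : Sym2 V → ℕ) (fun s => (r s : ℝ))
        hl0 hy0 (fun s hs t ht hst W hW => by
          have := hP s hs t ht hst W hW
          rw [← h0, zero_mul, add_zero] at this
          simpa using this)
      have hb := Dval_bound G hc hcut (0 : Sym2 V → ℕ) hp
      simp only [Pi.zero_apply, Nat.cast_zero, mul_zero, Finset.sum_const_zero] at hb hle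
      rw [← h0, zero_mul]
      linarith
    · obtain ⟨p, hp, hle⟩ := exists_potential_ge G hc a (fun s => (r s : ℝ))
        (l := fun e => l e / z) (y := fun s => y s / z)
        (fun e => div_nonneg (hl0 e) hz0) (fun s => div_nonneg (hy0 s) hz0)
        (fun s hs t ht hst W hW => by
          have := hP s hs t ht hst W hW
          have e : wlen (fun e => l e / z + (a e : ℝ)) W =
              (wlen l W + z * wlen (fun e => (a e : ℝ)) W) / z := by
            simp only [wlen_path _ hW]
            rw [Finset.mul_sum, ← Finset.sum_add_distrib, Finset.sum_div]
            refine Finset.sum_congr rfl fun e _ => ?_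
            split_ifs
            · field_simp
            · simp
          rw [e, ← add_div]
          exact div_le_div_of_nonneg_right this hz0)
      have hb := hle.trans (hγ p hp)
      simp only [← mul_div_assoc, ← Finset.sum_div, ← sub_div] at hb
      rw [div_le_iff₀ h0] at hb
      linarith)
  let e := Fintype.equivFin (SPath G S)
  have tr : ∀ f : SPath G S → ℝ, ∑ i, f (e.symm i) = ∑ P, f P := fun f => Equiv.sum_comp e.symm f
  let M : Multiflow G S fun e => (c e : ℝ) :=
    { N := Fintype.card (SPath G S)
      src := fun i => (e.symm i).1.1.1
      dst := fun i => (e.symm i).1.1.2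
      walk := fun i => (e.symm i).2.1
      isPath := fun i => (e.symm i).2.2
      srcS := fun i => (e.symm i).1.2.1
      dstS := fun i => (e.symm i).1.2.2.1
      srcdst := fun i => (e.symm i).1.2.2.2
      lam := fun i => x (e.symm i)
      lam_nonneg := fun i => hx0 _
      cap := fun d _ => by
        rw [tr (fun P => if d ∈ P.2.1.edges then x P else 0)]
        simpa using hx (.inl d) }
  refine ⟨M, fun s hs => ?_, ?_⟩
  · have h1 := hx (.inr (.inl s))
    have h2 : M.termVal s = ∑ P : SPath G S, if P.1.1.1 = s ∨ P.1.1.2 = s then x P else 0 :=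
      tr (fun P => if P.1.1.1 = s ∨ P.1.1.2 = s then x P else 0)
    rw [h2]
    simp only [ite_mul, neg_mul, one_mul, zero_mul, if_pos hs] at h1
    have h3 : ∑ P : SPath G S, (if P.1.1.1 = s ∨ P.1.1.2 = s then - x P else 0) =
        - ∑ P : SPath G S, if P.1.1.1 = s ∨ P.1.1.2 = s then x P else 0 := by
      rw [← Finset.sum_neg_distrib]
      exact Finset.sum_congr rfl fun P _ => by split_ifs <;> simp
    linarith
  · have h1 := hx (.inr (.inr ()))
    unfold Multiflow.cost
    rw [M.sum_edge_eq_sum_path]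
    have h2 : ∑ i, M.lam i * wlen (fun e => (a e : ℝ)) (M.walk i) =
        ∑ P : SPath G S, x P * wlen (fun e => (a e : ℝ)) P.2.1 :=
      tr (fun P => x P * wlen (fun e => (a e : ℝ)) P.2.1)
    rw [h2]
    simpa only [mul_comm] using h1

end Strong

/-- Proposition 3.4, duality for minimum-cost node-demand multiflow.
In the network `N = (V, E, S, c, a, r)` with integer capacities, costs and demands
satisfying the feasibility condition, the minimum total cost `a_f` over all feasible
multiflows `f` equals the maximum of `D-val(p)` over all potentials `p`, and this
maximum is attained by a proper half-integral potential. -/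
theorem stmt17 {V : Type*} [Fintype V] [DecidableEq V]
    (G : SimpleGraph V) [DecidableRel G.Adj] (S : Finset V)
    (c a : Sym2 V → ℕ) (r : V → ℕ)
    (hfeas : ∀ s ∈ S, ∀ X : Finset V, s ∈ X → (∀ t ∈ S, t ∈ X → t = s) →
      (r s : ℝ) ≤ cutCap G (fun e => (c e : ℝ)) X) :
    ∃ (M : Multiflow G S fun e => (c e : ℝ)) (p : V → V → ℝ),
      M.Feasible (fun s => (r s : ℝ)) ∧
      IsPotential S p ∧ HalfIntegral p ∧ ProperPotential S p ∧
      M.cost (fun e => (a e : ℝ)) =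
        Dval G S (fun e => (c e : ℝ)) (fun e => (a e : ℝ)) (fun s => (r s : ℝ)) p ∧
      (∀ M' : Multiflow G S fun e => (c e : ℝ), M'.Feasible (fun s => (r s : ℝ)) →
        M.cost (fun e => (a e : ℝ)) ≤ M'.cost (fun e => (a e : ℝ))) ∧
      (∀ q : V → V → ℝ, IsPotential S q →
        Dval G S (fun e => (c e : ℝ)) (fun e => (a e : ℝ)) (fun s => (r s : ℝ)) q ≤
        Dval G S (fun e => (c e : ℝ)) (fun e => (a e : ℝ)) (fun s => (r s : ℝ)) p) := by
  obtain ⟨p, hp, hh, hpr, hmax⟩ := exists_dual_max G c a r hfeas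
  obtain ⟨M, hM, hcost⟩ := exists_multiflow G c a r hfeas _ hmax
  have hw := weak_duality M hM hp (a := fun e => (a e : ℝ))
  exact ⟨M, p, hM, hp, hh, hpr, le_antisymm hcost hw,
    fun M' hM' => hcost.trans (weak_duality M' hM' hp), hmax⟩
end
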